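/- Let Ω⁻, Ω⁺ ⊆ ℝ^d be open convex sets, let μ⁻, μ⁺ be absolutely continuous probability measures compactly supported in Ω⁻ and Ω⁺ respectively with densities in L^∞, and let c : Ω⁻ × Ω⁺ → ℝ be a C² cost that is infinitesimally twisted. Then there exist constants m, M ≥ 0 such that for every ε ∈ (0,1): v_0 + (d/2)·ε·log(1/ε) − m·ε ≤ v_ε ≤ v_0 + (d/2)·ε·log(1/ε) + M·ε; in particular v_ε = v_0 + (d/2)·ε·log(1/ε) + O(ε) as ε → 0⁺. -/

import Mathlib

open MeasureTheory Real Set Filter Classical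
open scoped ENNReal NNReal Topology

noncomputable section

/-- Relative entropy (Kullback–Leibler divergence) `Ent(γ | q)`, with values in `EReal`:
it equals `∫ ρ log ρ dq` if `γ = ρ·q` (with `ρ log ρ` integrable) and `+∞` otherwise. -/
def Ent {α : Type*} [MeasurableSpace α] (γ q : Measure α) : EReal :=
  if γ ≪ q ∧ Integrable (fun x => ((γ.rnDeriv q) x).toReal * Real.log ((γ.rnDeriv q) x).toReal) q
  then ((∫ x, ((γ.rnDeriv q) x).toReal * Real.log ((γ.rnDeriv q) x).toReal ∂q : ℝ) : EReal)
  else ⊤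

/-- Entropic optimal transport cost
`v_ε = inf { ∫ c dγ + ε Ent(γ | μ⁻ ⊗ μ⁺) : γ coupling of μ⁻ and μ⁺ }`. -/
def entCost {α β : Type*} [MeasurableSpace α] [MeasurableSpace β]
    (μm : Measure α) (μp : Measure β) (c : α × β → ℝ) (ε : ℝ) : EReal :=
  sInf {v : EReal | ∃ γ : Measure (α × β), IsProbabilityMeasure γ ∧ γ.fst = μm ∧ γ.snd = μp ∧
    v = ((∫ p, c p ∂γ : ℝ) : EReal) + (ε : EReal) * Ent γ (μm.prod μp)}

/-- The cross second derivative matrix `∇²ₓᵧ c(x,y) = (∂²c/∂xᵢ∂yⱼ)ᵢⱼ`. -/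
def crossDeriv {d : ℕ} (c : EuclideanSpace ℝ (Fin d) × EuclideanSpace ℝ (Fin d) → ℝ)
    (x y : EuclideanSpace ℝ (Fin d)) : Matrix (Fin d) (Fin d) ℝ :=
  Matrix.of fun i j =>
    fderiv ℝ (fun y' => fderiv ℝ (fun x' => c (x', y')) x (EuclideanSpace.single i 1)) y
      (EuclideanSpace.single j 1)

theorem exists_measure_of_positive_linear {X : Type*} [TopologicalSpace X] [CompactSpace X]
    [T2Space X] [MeasurableSpace X] [BorelSpace X] (L : C(X, ℝ) →ₗ[ℝ] ℝ)
    (hL : ∀ f : C(X, ℝ), 0 ≤ f → 0 ≤ L f) :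
    ∃ γ : Measure X, IsFiniteMeasure γ ∧ ∀ f : C(X, ℝ), ∫ x, f x ∂γ = L f := by
  let T : CompactlySupportedContinuousMap X ℝ →ₗ[ℝ] ℝ :=
    { toFun := fun f => L f.toContinuousMap
      map_add' := fun f g => by
        rw [← map_add]; rfl
      map_smul' := fun a f => by
        rw [← map_smul]; rfl }
  let Λ := PositiveLinearMap.mk₀ T (fun f hf => hL _ (fun x => CompactlySupportedContinuousMap.le_def.1 hf x))
  refine ⟨RealRMK.rieszMeasure Λ, inferInstance, fun f => ?_⟩
  have h := RealRMK.integral_rieszMeasure Λ (CompactlySupportedContinuousMap.continuousMapEquiv f)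
  exact h

/-- Value of the dual problem of superhedging `f` by a sum of two continuous functions. -/
def superhedge {X Y : Type*} [TopologicalSpace X] [TopologicalSpace Y] [MeasurableSpace X]
    [MeasurableSpace Y] (μ : Measure X) (ν : Measure Y) (f : C(X × Y, ℝ)) : ℝ :=
  sInf {r : ℝ | ∃ (φ : C(X, ℝ)) (ψ : C(Y, ℝ)), (∀ x y, f (x, y) ≤ φ x + ψ y) ∧
    r = ∫ x, φ x ∂μ + ∫ y, ψ y ∂ν}

theorem exists_lt_of_superhedge {X Y : Type*} [TopologicalSpace X] [TopologicalSpace Y] [CompactSpace X]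
    [CompactSpace Y] [MeasurableSpace X] [MeasurableSpace Y] {μ : Measure X} {ν : Measure Y}
    (f : C(X × Y, ℝ)) {η : ℝ} (hη : 0 < η) :
    ∃ (φ : C(X, ℝ)) (ψ : C(Y, ℝ)), (∀ x y, f (x, y) ≤ φ x + ψ y) ∧
      ∫ x, φ x ∂μ + ∫ y, ψ y ∂ν < superhedge μ ν f + η := by
  have hne : {r : ℝ | ∃ (φ : C(X, ℝ)) (ψ : C(Y, ℝ)), (∀ x y, f (x, y) ≤ φ x + ψ y) ∧
      r = ∫ x, φ x ∂μ + ∫ y, ψ y ∂ν}.Nonempty :=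
    ⟨_, ContinuousMap.const X ‖f‖, 0, fun x y => by
      simpa using (le_abs_self _).trans (f.norm_coe_le_norm (x, y)), rfl⟩
  obtain ⟨r, ⟨φ, ψ, h, rfl⟩, hr⟩ := exists_lt_of_csInf_lt hne (lt_add_of_pos_right _ hη)
  exact ⟨φ, ψ, h, hr⟩

section duality

variable {X Y : Type*} [TopologicalSpace X] [TopologicalSpace Y] [CompactSpace X] [CompactSpace Y]
  [MeasurableSpace X] [MeasurableSpace Y] [BorelSpace X] [BorelSpace Y]
  {μ : Measure X} {ν : Measure Y} [IsProbabilityMeasure μ] [IsProbabilityMeasure ν]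

theorem integrable_continuousMap_of_compact (φ : C(X, ℝ)) : Integrable φ μ :=
  φ.continuous.integrable_of_hasCompactSupport (HasCompactSupport.of_compactSpace _)

theorem neg_norm_le_of_superhedge {f : C(X × Y, ℝ)} {φ : C(X, ℝ)} {ψ : C(Y, ℝ)}
    (h : ∀ x y, f (x, y) ≤ φ x + ψ y) : -‖f‖ ≤ ∫ x, φ x ∂μ + ∫ y, ψ y ∂ν := by
  have hx : ∀ x, -‖f‖ - φ x ≤ ∫ y, ψ y ∂ν := fun x => by
    have := integral_mono (μ := ν) (integrable_const (-‖f‖ - φ x))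
      (integrable_continuousMap_of_compact ψ) (fun y => by
        have h1 := h x y
        have h2 := neg_le_of_abs_le (f.norm_coe_le_norm (x, y))
        show -‖f‖ - φ x ≤ ψ y
        linarith)
    simpa using this
  have := integral_mono (μ := μ) (integrable_const (-‖f‖ - ∫ y, ψ y ∂ν))
      (integrable_continuousMap_of_compact φ) (fun x => by
        have := hx x
        show -‖f‖ - ∫ y, ψ y ∂ν ≤ φ x
        linarith)
  simp at this
  linarith

theorem superhedge_le {f : C(X × Y, ℝ)} {φ : C(X, ℝ)} {ψ : C(Y, ℝ)}
    (h : ∀ x y, f (x, y) ≤ φ x + ψ y) :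
    superhedge μ ν f ≤ ∫ x, φ x ∂μ + ∫ y, ψ y ∂ν := by
  refine csInf_le ⟨-‖f‖, ?_⟩ ⟨φ, ψ, h, rfl⟩
  rintro r ⟨φ, ψ, h, rfl⟩
  exact neg_norm_le_of_superhedge h

theorem superhedge_add_le (f g : C(X × Y, ℝ)) :
    superhedge μ ν (f + g) ≤ superhedge μ ν f + superhedge μ ν g := by
  refine le_of_forall_pos_le_add fun η hη => ?_
  obtain ⟨φ, ψ, h, hr⟩ := exists_lt_of_superhedge (μ := μ) (ν := ν) f (half_pos hη)
  obtain ⟨φ', ψ', h', hr'⟩ := exists_lt_of_superhedge (μ := μ) (ν := ν) g (half_pos hη)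
  have := superhedge_le (μ := μ) (ν := ν) (f := f + g) (φ := φ + φ') (ψ := ψ + ψ') (fun x y => by
    have h1 := h x y
    have h2 := h' x y
    simp only [ContinuousMap.add_apply]
    linarith)
  simp only [ContinuousMap.add_apply] at this
  rw [integral_add (integrable_continuousMap_of_compact _) (integrable_continuousMap_of_compact _),
    integral_add (integrable_continuousMap_of_compact _) (integrable_continuousMap_of_compact _)]
    at this
  linarith

theorem superhedge_smul_le {a : ℝ} (ha : 0 < a) (f : C(X × Y, ℝ)) :
    superhedge μ ν (a • f) ≤ a * superhedge μ ν f := by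
  refine le_of_forall_pos_le_add fun η hη => ?_
  obtain ⟨φ, ψ, h, hr⟩ := exists_lt_of_superhedge (μ := μ) (ν := ν) f (div_pos hη ha)
  have := superhedge_le (μ := μ) (ν := ν) (f := a • f) (φ := a • φ) (ψ := a • ψ) (fun x y => by
    simp only [ContinuousMap.smul_apply, smul_eq_mul]
    nlinarith [h x y])
  simp only [ContinuousMap.smul_apply, smul_eq_mul, integral_const_mul] at this
  calc _ ≤ a * (∫ x, φ x ∂μ + ∫ y, ψ y ∂ν) := by linarith
    _ ≤ a * (superhedge μ ν f + η / a) := by gcongr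
    _ = _ := by field_simp

theorem superhedge_smul {a : ℝ} (ha : 0 < a) (f : C(X × Y, ℝ)) :
    superhedge μ ν (a • f) = a * superhedge μ ν f := by
  refine le_antisymm (superhedge_smul_le ha f) ?_
  have := superhedge_smul_le (μ := μ) (ν := ν) (inv_pos.2 ha) (a • f)
  rw [smul_smul, inv_mul_cancel₀ ha.ne', one_smul] at this
  calc _ ≤ a * (a⁻¹ * superhedge μ ν (a • f)) := by gcongr
    _ = _ := by field_simp

/-- Kantorovich duality together with existence of an optimal coupling, for continuous costs on
compact spaces. -/
theorem exists_coupling_dual_gap_le [T2Space X] [T2Space Y] [HasOuterApproxClosed X]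
    [HasOuterApproxClosed Y] [SecondCountableTopologyEither X Y] (c : C(X × Y, ℝ)) :
    ∃ γ : Measure (X × Y), IsProbabilityMeasure γ ∧ γ.fst = μ ∧ γ.snd = ν ∧
      ∀ η > 0, ∃ (φ : C(X, ℝ)) (ψ : C(Y, ℝ)), (∀ x y, φ x + ψ y ≤ c (x, y)) ∧
        ∫ p, c p ∂γ ≤ ∫ x, φ x ∂μ + ∫ y, ψ y ∂ν + η := by
  have h0 : superhedge μ ν 0 = 0 := by
    have := superhedge_smul (μ := μ) (ν := ν) two_pos 0
    rw [smul_zero] at this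
    linarith
  let f0 : C(X × Y, ℝ) →ₗ.[ℝ] ℝ := LinearPMap.mkSpanSingleton' (-c) (superhedge μ ν (-c))
    (fun a ha => by
      rcases smul_eq_zero.1 ha with h | h
      · simp [h]
      · rw [h, h0, smul_zero])
  obtain ⟨L, hL1, hL2⟩ := exists_extension_of_le_sublinear f0 (superhedge μ ν)
    (fun a ha f => superhedge_smul ha f) superhedge_add_le (by
      rintro ⟨x, hx⟩
      obtain ⟨a, rfl⟩ := Submodule.mem_span_singleton.1 hx
      rw [LinearPMap.mkSpanSingleton'_apply]
      show a * superhedge μ ν (-c) ≤ superhedge μ ν (a • (-c))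
      rcases lt_trichotomy a 0 with h | h | h
      · have h1 := superhedge_add_le (μ := μ) (ν := ν) (a • (-c)) ((-a) • (-c))
        rw [superhedge_smul (neg_pos.2 h), ← add_smul, add_neg_cancel, zero_smul, h0] at h1
        linarith
      · simp [h, h0]
      · rw [superhedge_smul h])
  obtain ⟨γ, hγ, hγL⟩ := exists_measure_of_positive_linear L (fun f hf => by
    have h1 := hL2 (-f)
    have h2 := superhedge_le (μ := μ) (ν := ν) (f := -f) (φ := 0) (ψ := 0) (fun x y => by
      simpa using hf (x, y))
    simp only [map_neg, ContinuousMap.zero_apply, integral_zero, add_zero] at h1 h2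
    linarith)
  have hX : ∀ φ : C(X, ℝ), ∫ p, φ p.1 ∂γ = ∫ x, φ x ∂μ := by
    have key : ∀ φ : C(X, ℝ), ∫ p, φ p.1 ∂γ ≤ ∫ x, φ x ∂μ := fun φ => by
      have h1 := superhedge_le (μ := μ) (ν := ν) (f := φ.comp ContinuousMap.fst) (φ := φ) (ψ := 0)
        (fun x y => by simp)
      have h2 := hγL (φ.comp ContinuousMap.fst)
      have h3 := hL2 (φ.comp ContinuousMap.fst)
      simp at h1 h2
      linarith
    intro φ
    have h1 := key (-φ)
    simp only [ContinuousMap.neg_apply, integral_neg] at h1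
    linarith [key φ]
  have hY : ∀ ψ : C(Y, ℝ), ∫ p, ψ p.2 ∂γ = ∫ y, ψ y ∂ν := by
    have key : ∀ ψ : C(Y, ℝ), ∫ p, ψ p.2 ∂γ ≤ ∫ y, ψ y ∂ν := fun ψ => by
      have h1 := superhedge_le (μ := μ) (ν := ν) (f := ψ.comp ContinuousMap.snd) (φ := 0) (ψ := ψ)
        (fun x y => by simp)
      have h2 := hγL (ψ.comp ContinuousMap.snd)
      have h3 := hL2 (ψ.comp ContinuousMap.snd)
      simp at h1 h2
      linarith
    intro ψ
    have h1 := key (-ψ)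
    simp only [ContinuousMap.neg_apply, integral_neg] at h1
    linarith [key ψ]
  have hfst : γ.fst = μ := by
    refine ext_of_forall_integral_eq_of_IsFiniteMeasure fun f => ?_
    rw [Measure.fst, integral_map measurable_fst.aemeasurable
      f.continuous.aestronglyMeasurable]
    exact hX f.toContinuousMap
  have hsnd : γ.snd = ν := by
    refine ext_of_forall_integral_eq_of_IsFiniteMeasure fun f => ?_
    rw [Measure.snd, integral_map measurable_snd.aemeasurable
      f.continuous.aestronglyMeasurable]
    exact hY f.toContinuousMap
  refine ⟨γ, ⟨by rw [← Measure.fst_univ, hfst, measure_univ]⟩, hfst, hsnd, fun η hη => ?_⟩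
  obtain ⟨φ, ψ, h, hr⟩ := exists_lt_of_superhedge (μ := μ) (ν := ν) (-c) hη
  refine ⟨-φ, -ψ, fun x y => ?_, ?_⟩
  · have := h x y
    simp only [ContinuousMap.neg_apply] at this ⊢
    linarith
  · have h1 := hγL (-c)
    have h2 : L (-c) = superhedge μ ν (-c) :=
      (hL1 ⟨-c, Submodule.mem_span_singleton_self _⟩).trans
        (LinearPMap.mkSpanSingleton'_apply_self _ _ _ _)
    simp only [ContinuousMap.neg_apply, integral_neg] at h1 h2 ⊢
    linarith

end duality

theorem coupling_compl_prod_eq_zero {α β : Type*} [MeasurableSpace α] [MeasurableSpace β]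
    {γ : Measure (α × β)} {s : Set α} {t : Set β} (hs : MeasurableSet s) (ht : MeasurableSet t)
    (hγs : γ.fst sᶜ = 0) (hγt : γ.snd tᶜ = 0) : γ (s ×ˢ t)ᶜ = 0 := by
  rw [Measure.fst_apply hs.compl] at hγs
  rw [Measure.snd_apply ht.compl] at hγt
  refine measure_mono_null (fun p hp => ?_) (measure_union_null hγs hγt)
  simp only [mem_compl_iff, mem_prod, not_and_or] at hp
  exact hp

theorem exists_optimal_coupling {α β : Type*} [MetricSpace α] [MeasurableSpace α] [BorelSpace α]
    [SecondCountableTopology α] [MetricSpace β] [MeasurableSpace β] [BorelSpace β]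
    {μ : Measure α} {ν : Measure β} [IsProbabilityMeasure μ] [IsProbabilityMeasure ν]
    {s : Set α} {t : Set β} (hs : IsCompact s) (ht : IsCompact t) (hμ : μ sᶜ = 0) (hν : ν tᶜ = 0)
    {c : α × β → ℝ} (hc : ContinuousOn c (s ×ˢ t)) :
    ∃ γ : Measure (α × β), IsProbabilityMeasure γ ∧ γ.fst = μ ∧ γ.snd = ν ∧
      ∀ η > 0, ∃ (φ : α → ℝ) (ψ : β → ℝ), Measurable φ ∧ Measurable ψ ∧ (∃ B, ∀ x, |φ x| ≤ B) ∧
        (∃ B, ∀ y, |ψ y| ≤ B) ∧ (∀ x ∈ s, ∀ y ∈ t, φ x + ψ y ≤ c (x, y)) ∧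
        ∫ p, c p ∂γ ≤ ∫ x, φ x ∂μ + ∫ y, ψ y ∂ν + η := by
  have := isCompact_iff_compactSpace.1 hs
  have := isCompact_iff_compactSpace.1 ht
  have es : MeasurableEmbedding (Subtype.val : s → α) :=
    MeasurableEmbedding.subtype_coe hs.measurableSet
  have et : MeasurableEmbedding (Subtype.val : t → β) :=
    MeasurableEmbedding.subtype_coe ht.measurableSet
  have hμm : (μ.comap (Subtype.val : s → α)).map Subtype.val = μ := by
    rw [es.map_comap, Subtype.range_coe]
    exact Measure.restrict_eq_self_of_ae_mem (by rwa [ae_iff])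
  have hνm : (ν.comap (Subtype.val : t → β)).map Subtype.val = ν := by
    rw [et.map_comap, Subtype.range_coe]
    exact Measure.restrict_eq_self_of_ae_mem (by rwa [ae_iff])
  have : IsProbabilityMeasure (μ.comap (Subtype.val : s → α)) := by
    refine ⟨?_⟩
    rw [← measure_univ (μ := μ)]
    conv_rhs => rw [← hμm, Measure.map_apply measurable_subtype_coe .univ, preimage_univ]
  have : IsProbabilityMeasure (ν.comap (Subtype.val : t → β)) := by
    refine ⟨?_⟩
    rw [← measure_univ (μ := ν)]
    conv_rhs => rw [← hνm, Measure.map_apply measurable_subtype_coe .univ, preimage_univ]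
  let c' : C(s × t, ℝ) := ⟨fun p => c (p.1, p.2),
    hc.comp_continuous (by fun_prop) (fun p => ⟨p.1.2, p.2.2⟩)⟩
  obtain ⟨γ, hγ, hfst, hsnd, hgap⟩ := exists_coupling_dual_gap_le
    (μ := μ.comap (Subtype.val : s → α)) (ν := ν.comap (Subtype.val : t → β)) c'
  have hm : Measurable (Prod.map (Subtype.val : s → α) (Subtype.val : t → β)) := by fun_prop
  refine ⟨γ.map (Prod.map Subtype.val Subtype.val), Measure.isProbabilityMeasure_map
    hm.aemeasurable, ?_, ?_, fun η hη => ?_⟩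
  · rw [← hμm, ← hfst, Measure.fst, Measure.fst, Measure.map_map measurable_fst hm,
      Measure.map_map measurable_subtype_coe measurable_fst]
    rfl
  · rw [← hνm, ← hsnd, Measure.snd, Measure.snd, Measure.map_map measurable_snd hm,
      Measure.map_map measurable_subtype_coe measurable_snd]
    rfl
  · obtain ⟨φ, ψ, h, hr⟩ := hgap η hη
    have hφ : ∫ x, Function.extend Subtype.val φ 0 x ∂μ = ∫ x, φ x ∂(μ.comap Subtype.val) := by
      conv_lhs => rw [← hμm, es.integral_map]
      simp
    have hψ : ∫ x, Function.extend Subtype.val ψ 0 x ∂ν = ∫ x, ψ x ∂(ν.comap Subtype.val) := by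
      conv_lhs => rw [← hνm, et.integral_map]
      simp
    refine ⟨Function.extend Subtype.val φ 0, Function.extend Subtype.val ψ 0,
      es.measurable_extend φ.continuous.measurable measurable_const,
      et.measurable_extend ψ.continuous.measurable measurable_const, ⟨‖φ‖, fun x => ?_⟩,
      ⟨‖ψ‖, fun x => ?_⟩, fun x hx y hy => ?_, ?_⟩
    · by_cases hx : ∃ a : s, Subtype.val a = x
      · obtain ⟨a, rfl⟩ := hx
        rw [es.injective.extend_apply]
        exact φ.norm_coe_le_norm a
      · rw [Function.extend_apply' _ _ _ hx]
        simp
    · by_cases hx : ∃ a : t, Subtype.val a = x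
      · obtain ⟨a, rfl⟩ := hx
        rw [et.injective.extend_apply]
        exact ψ.norm_coe_le_norm a
      · rw [Function.extend_apply' _ _ _ hx]
        simp
    · have h1 := es.injective.extend_apply φ 0 ⟨x, hx⟩
      have h2 := et.injective.extend_apply ψ 0 ⟨y, hy⟩
      simp only at h1 h2
      rw [h1, h2]
      exact h ⟨x, hx⟩ ⟨y, hy⟩
    · rw [hφ, hψ, (es.prodMap et).integral_map]
      exact hr

theorem neg_log_le_integral_add_entropy {Ω : Type*} [MeasurableSpace Ω] {γ q : Measure Ω}
    [IsProbabilityMeasure γ] [IsProbabilityMeasure q] (hγq : γ ≪ q)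
    (hent : Integrable (fun x => (γ.rnDeriv q x).toReal * log (γ.rnDeriv q x).toReal) q)
    {F : Ω → ℝ} (hF : Measurable F) (hFγ : Integrable F γ) {Z : ℝ} (hZ : 0 < Z)
    (hFZ : ∫⁻ x, ENNReal.ofReal (exp (-F x)) ∂q ≤ ENNReal.ofReal Z) :
    -log Z ≤ ∫ x, F x ∂γ + ∫ x, (γ.rnDeriv q x).toReal * log (γ.rnDeriv q x).toReal ∂q := by
  have hexp : Integrable (fun x => exp (-F x)) q := by
    refine ⟨by fun_prop, ?_⟩
    rw [hasFiniteIntegral_iff_ofReal (ae_of_all _ fun x => (exp_pos _).le)]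
    exact hFZ.trans_lt ENNReal.ofReal_lt_top
  have hexpZ : ∫ x, exp (-F x) ∂q ≤ Z := by
    rw [integral_eq_lintegral_of_nonneg_ae (ae_of_all _ fun x => (exp_pos _).le) (by fun_prop)]
    exact ENNReal.toReal_le_of_le_ofReal hZ.le hFZ
  have hρF : Integrable (fun x => (γ.rnDeriv q x).toReal * F x) q :=
    (integrable_rnDeriv_smul_iff hγq).2 hFγ
  have hρ : Integrable (fun x => (γ.rnDeriv q x).toReal) q := Measure.integrable_toReal_rnDeriv
  have hInt : ∫ x, (γ.rnDeriv q x).toReal * F x ∂q = ∫ x, F x ∂γ := integral_rnDeriv_smul hγq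
  have hone : ∫ x, (γ.rnDeriv q x).toReal ∂q = 1 := by
    rw [Measure.integral_toReal_rnDeriv hγq]; simp
  have key : ∀ ρ : ℝ, 0 ≤ ρ → ∀ a : ℝ,
      (1 - log Z) * ρ - ρ * a - Z⁻¹ * exp (-a) ≤ ρ * log ρ := by
    intro ρ hρ a
    rcases hρ.eq_or_lt with rfl | hρ
    · simp; positivity
    · have h1 := add_one_le_exp (-a - log Z - log ρ)
      rw [exp_sub, exp_sub, exp_log hZ, exp_log hρ, le_div_iff₀ hρ] at h1
      rw [inv_mul_eq_div]
      linarith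
  have hsub : Integrable (fun x => (1 - log Z) * (γ.rnDeriv q x).toReal -
      (γ.rnDeriv q x).toReal * F x) q := (hρ.const_mul (1 - log Z)).sub hρF
  have := integral_mono (hsub.sub (hexp.const_mul Z⁻¹)) hent
    (fun x => key _ ENNReal.toReal_nonneg (F x))
  simp only [Pi.sub_apply] at this
  rw [integral_sub hsub (hexp.const_mul Z⁻¹),
    integral_sub (hρ.const_mul (1 - log Z)) hρF, integral_const_mul, integral_const_mul, hInt,
    hone] at this
  have h2 : Z⁻¹ * ∫ x, exp (-F x) ∂q ≤ 1 := by
    rw [inv_mul_le_iff₀ hZ]; linarith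
  linarith

theorem mul_log_sum_le {ι : Type*} [Fintype ι] {r u : ι → ℝ} (hr : ∀ i, 0 ≤ r i)
    (hu : ∀ i, 0 ≤ u i) (hu1 : ∑ i, u i ≤ 1) :
    (∑ i, r i * u i) * log (∑ i, r i * u i) ≤ ∑ i, r i * log (r i) * u i := by
  set ρ := ∑ i, r i * u i with hρ
  have hρ0 : 0 ≤ ρ := Finset.sum_nonneg fun i _ => mul_nonneg (hr i) (hu i)
  rcases hρ0.eq_or_lt with h0 | h0
  · have hz : ∀ i, r i * u i = 0 := fun i =>
      (Finset.sum_eq_zero_iff_of_nonneg fun i _ => mul_nonneg (hr i) (hu i)).1 h0.symm i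
        (Finset.mem_univ i)
    have : ∀ i, r i * log (r i) * u i = 0 := fun i => by
      rw [mul_right_comm, hz, zero_mul]
    simp [← h0, this]
  · have key : ∀ i, r i * u i * log ρ - r i * log (r i) * u i ≤ ρ * u i - r i * u i := fun i => by
      rcases (hr i).eq_or_lt with h | h
      · rw [← h]
        have := mul_nonneg hρ0 (hu i)
        simp only [zero_mul, sub_zero, sub_self]
        exact this
      · have h1 := log_le_sub_one_of_pos (div_pos h0 h)
        rw [log_div h0.ne' h.ne'] at h1
        have h2 := mul_le_mul_of_nonneg_left h1 (mul_nonneg h.le (hu i))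
        have h3 : r i * u i * (ρ / r i - 1) = ρ * u i - r i * u i := by
          field_simp
        linarith
    have := Finset.sum_le_sum fun i (_ : i ∈ Finset.univ) => key i
    rw [Finset.sum_sub_distrib, Finset.sum_sub_distrib, ← Finset.sum_mul, ← Finset.mul_sum, ← hρ]
      at this
    nlinarith

theorem sum_rnDeriv_le_one {Ω J : Type*} [Fintype J] [MeasurableSpace Ω] (ν : Measure Ω) [IsFiniteMeasure ν]
    (b : J → Measure Ω) (hb : Measure.sum b = ν) :
    ∀ᵐ y ∂ν, ∑ j, (b j).rnDeriv ν y ≤ 1 := by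
  have hle : ∀ j, b j ≤ ν := fun j => hb ▸ Measure.le_sum b j
  have h1 : ν.withDensity (fun y => ∑ j, (b j).rnDeriv ν y) = ν := by
    have := withDensity_tsum (μ := ν) (fun j => Measure.measurable_rnDeriv (b j) ν)
    rw [tsum_fintype] at this
    conv_rhs => rw [← hb]
    convert this using 2
    · ext y; simp
    · ext1 j
      have := isFiniteMeasure_of_le ν (hle j)
      exact (Measure.withDensity_rnDeriv_eq _ _ (Measure.absolutelyContinuous_of_le (hle j))).symm
  have h2 := Measure.rnDeriv_withDensity ν (f := fun y => ∑ j, (b j).rnDeriv ν y)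
    (Finset.measurable_fun_sum _ fun j _ => Measure.measurable_rnDeriv _ _)
  rw [h1] at h2
  filter_upwards [h2, ν.rnDeriv_self] with y hy1 hy2
  rw [← hy1, hy2]

theorem ofReal_inv_real_mul_smul {Ω Ω' : Type*} [MeasurableSpace Ω] [MeasurableSpace Ω']
    (θ : Measure Ω) [IsFiniteMeasure θ] {f : Ω → Ω'} :
    (ENNReal.ofReal (θ.real univ)⁻¹ * θ univ) • θ.map f = θ.map f := by
  by_cases h : θ = 0
  · simp [h]
  · have h0 : θ univ ≠ 0 := by simpa using h
    rw [measureReal_def, ENNReal.ofReal_inv_of_pos (ENNReal.toReal_pos h0 (measure_ne_top _ _)),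
      ENNReal.ofReal_toReal (measure_ne_top _ _), ENNReal.inv_mul_cancel h0 (measure_ne_top _ _),
      one_smul]

section blockApprox

variable {α β J : Type*} [MeasurableSpace α] [MeasurableSpace β]

/-- On each cell of the partition given by the index map `κ`, replace `γ` by the normalized product
of its marginals. -/
def blockApprox (γ : Measure (α × β)) (κ : α × β → J) : Measure (α × β) :=
  Measure.sum fun j => ENNReal.ofReal (γ.real (κ ⁻¹' {j}))⁻¹ •
    (γ.restrict (κ ⁻¹' {j})).fst.prod (γ.restrict (κ ⁻¹' {j})).snd

variable [Fintype J]

theorem blockApprox_eq_withDensity (γ : Measure (α × β)) [IsProbabilityMeasure γ]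
    (κ : α × β → J) :
    blockApprox γ κ = (γ.fst.prod γ.snd).withDensity fun z =>
      ∑ j, ENNReal.ofReal (γ.real (κ ⁻¹' {j}))⁻¹ *
        ((γ.restrict (κ ⁻¹' {j})).fst.rnDeriv γ.fst z.1 *
          (γ.restrict (κ ⁻¹' {j})).snd.rnDeriv γ.snd z.2) := by
  have hf : ∀ j, γ.fst.withDensity ((γ.restrict (κ ⁻¹' {j})).fst.rnDeriv γ.fst) =
      (γ.restrict (κ ⁻¹' {j})).fst := fun j => Measure.withDensity_rnDeriv_eq _ _
    (Measure.absolutelyContinuous_of_le (Measure.fst_mono Measure.restrict_le_self))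
  have hg : ∀ j, γ.snd.withDensity ((γ.restrict (κ ⁻¹' {j})).snd.rnDeriv γ.snd) =
      (γ.restrict (κ ⁻¹' {j})).snd := fun j => Measure.withDensity_rnDeriv_eq _ _
    (Measure.absolutelyContinuous_of_le (Measure.snd_mono Measure.restrict_le_self))
  have hm : ∀ j, Measurable fun z : α × β => (γ.restrict (κ ⁻¹' {j})).fst.rnDeriv γ.fst z.1 *
      (γ.restrict (κ ⁻¹' {j})).snd.rnDeriv γ.snd z.2 := fun j =>
    ((Measure.measurable_rnDeriv _ _).comp measurable_fst).mul
      ((Measure.measurable_rnDeriv _ _).comp measurable_snd)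
  have h := withDensity_tsum (μ := γ.fst.prod γ.snd)
    (f := fun j z => ENNReal.ofReal (γ.real (κ ⁻¹' {j}))⁻¹ *
        ((γ.restrict (κ ⁻¹' {j})).fst.rnDeriv γ.fst z.1 *
          (γ.restrict (κ ⁻¹' {j})).snd.rnDeriv γ.snd z.2)) (fun j => (hm j).const_mul _)
  rw [tsum_fintype] at h
  rw [blockApprox]
  convert! h.symm using 2
  · ext1 j
    conv_lhs => rw [← hf j, ← hg j, prod_withDensity (Measure.measurable_rnDeriv _ _)
      (Measure.measurable_rnDeriv _ _), ← withDensity_smul _ (hm j)]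
    rfl
  · ext z; simp

variable [MeasurableSpace J] [MeasurableSingletonClass J]

theorem sum_restrict_preimage_singleton (γ : Measure (α × β)) {κ : α × β → J}
    (hκ : Measurable κ) : Measure.sum (fun j => γ.restrict (κ ⁻¹' {j})) = γ := by
  rw [← Measure.restrict_iUnion, ← preimage_iUnion, iUnion_of_singleton, preimage_univ,
    Measure.restrict_univ]
  · exact fun i j hij => Disjoint.preimage _ (by simpa using hij)
  · exact fun j => hκ (measurableSet_singleton j)

theorem sum_real_preimage_singleton (γ : Measure (α × β)) [IsProbabilityMeasure γ]
    {κ : α × β → J} (hκ : Measurable κ) : ∑ j, γ.real (κ ⁻¹' {j}) = 1 := by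
  rw [sum_measureReal_preimage_singleton _ fun j _ => hκ (measurableSet_singleton j)]
  simp

theorem fst_blockApprox (γ : Measure (α × β)) [IsFiniteMeasure γ] {κ : α × β → J}
    (hκ : Measurable κ) : (blockApprox γ κ).fst = γ.fst := by
  conv_rhs => rw [← sum_restrict_preimage_singleton γ hκ]
  rw [blockApprox, Measure.fst_sum, Measure.fst_sum]
  congr 1
  ext1 j
  have h := ofReal_inv_real_mul_smul (γ.restrict (κ ⁻¹' {j})) (f := Prod.fst)
  rw [measureReal_restrict_apply_univ, ← Measure.snd_univ] at h
  rw [Measure.fst, Measure.map_smul, Measure.map_fst_prod, smul_smul]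
  exact h

theorem snd_blockApprox (γ : Measure (α × β)) [IsFiniteMeasure γ] {κ : α × β → J}
    (hκ : Measurable κ) : (blockApprox γ κ).snd = γ.snd := by
  conv_rhs => rw [← sum_restrict_preimage_singleton γ hκ]
  rw [blockApprox, Measure.snd_sum, Measure.snd_sum]
  congr 1
  ext1 j
  have h := ofReal_inv_real_mul_smul (γ.restrict (κ ⁻¹' {j})) (f := Prod.snd)
  rw [measureReal_restrict_apply_univ, ← Measure.fst_univ] at h
  rw [Measure.snd, Measure.map_smul, Measure.map_snd_prod, smul_smul]
  exact h

theorem integral_prod_marginals_le (θ : Measure (α × β)) [IsFiniteMeasure θ]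
    {c : α × β → ℝ} (hc : Measurable c) {B : ℝ} (hB : ∀ p, |c p| ≤ B) {S : Set (α × β)}
    (hS : ∀ᵐ p ∂θ, p ∈ S) {Δ : ℝ}
    (hΔ : ∀ p ∈ S, ∀ p' ∈ S, c (p.1, p'.2) + c (p'.1, p.2) ≤ c p + c p' + 2 * Δ) :
    ∫ p, c p ∂(θ.fst.prod θ.snd) ≤ θ.real univ * ∫ p, c p ∂θ + Δ * θ.real univ ^ 2 := by
  have hInt : ∀ {f : (α × β) × (α × β) → α × β}, Measurable f →
      Integrable (fun z => c (f z)) (θ.prod θ) := fun {f} hf =>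
    Integrable.of_bound (hc.comp hf).aestronglyMeasurable B (ae_of_all _ fun z => hB _)
  have h1 : ∫ p, c p ∂(θ.fst.prod θ.snd) = ∫ z, c (z.1.1, z.2.2) ∂(θ.prod θ) := by
    rw [Measure.fst, Measure.snd, Measure.map_prod_map _ _ measurable_fst measurable_snd,
      integral_map (by fun_prop) hc.aestronglyMeasurable]
    rfl
  have h2 : ∫ z, c (z.1.1, z.2.2) ∂(θ.prod θ) = ∫ z, c (z.2.1, z.1.2) ∂(θ.prod θ) :=
    (integral_prod_swap (μ := θ) (ν := θ) (fun z => c (z.1.1, z.2.2))).symm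
  have h3 : ∫ z, c z.1 ∂(θ.prod θ) = θ.real univ * ∫ p, c p ∂θ := by
    rw [integral_fun_fst (μ := θ) (ν := θ) c, smul_eq_mul]
  have h4 : ∫ z, c z.2 ∂(θ.prod θ) = θ.real univ * ∫ p, c p ∂θ := by
    rw [integral_fun_snd (μ := θ) (ν := θ) c, smul_eq_mul]
  have h5 : ∫ z, (c (z.1.1, z.2.2) + c (z.2.1, z.1.2)) ∂(θ.prod θ) ≤
      ∫ z, (c z.1 + c z.2 + 2 * Δ) ∂(θ.prod θ) := by
    refine integral_mono_ae ((hInt (by fun_prop)).add (hInt (by fun_prop)))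
      (((hInt (by fun_prop)).add (hInt (by fun_prop))).add (integrable_const _)) ?_
    filter_upwards [Measure.quasiMeasurePreserving_fst.ae hS,
      Measure.quasiMeasurePreserving_snd.ae hS] with z hz1 hz2 using hΔ _ hz1 _ hz2
  have h6 : (θ.prod θ).real univ = θ.real univ ^ 2 := by
    simp [measureReal_def, Measure.prod_apply, sq]
  have hsum : Integrable (fun z : (α × β) × (α × β) => c z.1 + c z.2) (θ.prod θ) :=
    (hInt (by fun_prop)).add (hInt (by fun_prop))
  rw [integral_add (hInt (by fun_prop)) (hInt (by fun_prop)), integral_add hsum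
    (integrable_const _), integral_add (hInt (by fun_prop)) (hInt (by fun_prop)), integral_const,
    h6, smul_eq_mul] at h5
  linarith

theorem integral_blockApprox_le (γ : Measure (α × β)) [IsProbabilityMeasure γ] {κ : α × β → J}
    (hκ : Measurable κ) {c : α × β → ℝ} (hc : Measurable c) {B : ℝ} (hB : ∀ p, |c p| ≤ B)
    {S : Set (α × β)} (hS : ∀ᵐ p ∂γ, p ∈ S) {Δ : ℝ}
    (hΔ : ∀ p ∈ S, ∀ p' ∈ S, κ p = κ p' →
      c (p.1, p'.2) + c (p'.1, p.2) ≤ c p + c p' + 2 * Δ) :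
    ∫ p, c p ∂(blockApprox γ κ) ≤ ∫ p, c p ∂γ + Δ := by
  have hInt : ∀ (θ : Measure (α × β)) [IsFiniteMeasure θ], Integrable c θ := fun θ _ =>
    Integrable.of_bound hc.aestronglyMeasurable B (ae_of_all _ hB)
  have hcγ : ∑ j, ∫ p, c p ∂(γ.restrict (κ ⁻¹' {j})) = ∫ p, c p ∂γ := by
    conv_rhs => rw [← sum_restrict_preimage_singleton γ hκ, Measure.sum_fintype]
    rw [integral_finsetSum_measure fun j _ => hInt _]
  rw [blockApprox, Measure.sum_fintype, integral_finsetSum_measure fun j _ =>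
    (hInt _).smul_measure ENNReal.ofReal_ne_top]
  calc _ ≤ ∑ j, (∫ p, c p ∂(γ.restrict (κ ⁻¹' {j})) + Δ * γ.real (κ ⁻¹' {j})) := by
        refine Finset.sum_le_sum fun j _ => ?_
        have hj : MeasurableSet (κ ⁻¹' {j}) := hκ (measurableSet_singleton j)
        have h := integral_prod_marginals_le (γ.restrict (κ ⁻¹' {j})) hc hB
          (S := S ∩ κ ⁻¹' {j}) ((ae_restrict_of_ae hS).and (ae_restrict_mem hj)) (Δ := Δ)
          (fun p hp p' hp' => hΔ p hp.1 p' hp'.1 (hp.2.trans hp'.2.symm))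
        rw [measureReal_restrict_apply_univ] at h
        rw [integral_smul_measure, ENNReal.toReal_ofReal (by positivity), smul_eq_mul]
        rcases (measureReal_nonneg (μ := γ) (s := κ ⁻¹' {j})).eq_or_lt with h0 | h0
        · have h0' : γ.restrict (κ ⁻¹' {j}) = 0 := by
            rw [Measure.restrict_eq_zero]
            exact (measureReal_eq_zero_iff).1 h0.symm
          simp [← h0, h0']
        · rw [inv_mul_le_iff₀ h0]
          linarith
    _ = _ := by rw [Finset.sum_add_distrib, ← Finset.mul_sum, sum_real_preimage_singleton γ hκ, hcγ, mul_one]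

theorem Ent_blockApprox_le (γ : Measure (α × β)) [IsProbabilityMeasure γ]
    {κ : α × β → J} (hκ : Measurable κ) :
    Ent (blockApprox γ κ) (γ.fst.prod γ.snd) ≤ ((log (Fintype.card J) : ℝ) : EReal) := by
  set q := γ.fst.prod γ.snd with hq
  set w : J → ℝ := fun j => γ.real (κ ⁻¹' {j}) with hw
  set f : J → α → ℝ≥0∞ := fun j => (γ.restrict (κ ⁻¹' {j})).fst.rnDeriv γ.fst with hf
  set g : J → β → ℝ≥0∞ := fun j => (γ.restrict (κ ⁻¹' {j})).snd.rnDeriv γ.snd with hg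
  have hfle : ∀ j, (γ.restrict (κ ⁻¹' {j})).fst ≤ γ.fst := fun j =>
    Measure.fst_mono Measure.restrict_le_self
  have hgle : ∀ j, (γ.restrict (κ ⁻¹' {j})).snd ≤ γ.snd := fun j =>
    Measure.snd_mono Measure.restrict_le_self
  have hfm : ∀ j, Measurable (f j) := fun j => Measure.measurable_rnDeriv _ _
  have hgm : ∀ j, Measurable (g j) := fun j => Measure.measurable_rnDeriv _ _
  have hf1 : ∀ᵐ z ∂q, ∀ j, f j z.1 ≤ 1 := Measure.quasiMeasurePreserving_fst.ae
    (ae_all_iff.2 fun j => Measure.rnDeriv_le_one_of_le (hfle j))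
  have hg1 : ∀ᵐ z ∂q, ∑ j, g j z.2 ≤ 1 := Measure.quasiMeasurePreserving_snd.ae
    (sum_rnDeriv_le_one γ.snd _ (by
      rw [← Measure.snd_sum, sum_restrict_preimage_singleton γ hκ]))
  set u : J → α × β → ℝ := fun j z => (f j z.1).toReal * (g j z.2).toReal with hu
  have hum : ∀ j, Measurable (u j) := fun j => by fun_prop
  have hu0 : ∀ j z, 0 ≤ u j z := fun j z => by positivity
  have hu1 : ∀ᵐ z ∂q, ∑ j, u j z ≤ 1 := by
    filter_upwards [hf1, hg1] with z hz1 hz2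
    calc ∑ j, u j z ≤ ∑ j, (g j z.2).toReal := by
          refine Finset.sum_le_sum fun j _ => mul_le_of_le_one_left ENNReal.toReal_nonneg ?_
          exact ENNReal.toReal_le_of_le_ofReal zero_le_one (by simpa using hz1 j)
      _ = (∑ j, g j z.2).toReal := (ENNReal.toReal_sum fun j _ => ne_top_of_le_ne_top
          ENNReal.one_ne_top ((Finset.single_le_sum (fun _ _ => zero_le)
            (Finset.mem_univ j)).trans hz2)).symm
      _ ≤ 1 := ENNReal.toReal_le_of_le_ofReal zero_le_one (by simpa using hz2)
  have hρm : Measurable fun z : α × β => ∑ j, ENNReal.ofReal (w j)⁻¹ * (f j z.1 * g j z.2) :=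
    Finset.measurable_fun_sum _ fun j _ => by fun_prop
  have heq : ∀ᵐ z ∂q, ((blockApprox γ κ).rnDeriv q z).toReal = ∑ j, (w j)⁻¹ * u j z := by
    have h := Measure.rnDeriv_withDensity q hρm
    rw [← blockApprox_eq_withDensity γ κ] at h
    filter_upwards [h, hf1, hg1] with z hz hz1 hz2
    rw [hz, ENNReal.toReal_sum]
    · refine Finset.sum_congr rfl fun j _ => ?_
      rw [ENNReal.toReal_mul, ENNReal.toReal_mul, ENNReal.toReal_ofReal
        (inv_nonneg.2 measureReal_nonneg)]
    · intro j _
      exact ENNReal.mul_ne_top ENNReal.ofReal_ne_top (ENNReal.mul_ne_top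
        (ne_top_of_le_ne_top ENNReal.one_ne_top (hz1 j)) (ne_top_of_le_ne_top
          ENNReal.one_ne_top ((Finset.single_le_sum (fun _ _ => zero_le)
            (Finset.mem_univ j)).trans hz2)))
  have hw0 : ∀ j, 0 ≤ w j := fun j => measureReal_nonneg
  have huint : ∀ j, Integrable (u j) q := fun j =>
    Integrable.mul_prod Measure.integrable_toReal_rnDeriv Measure.integrable_toReal_rnDeriv
  have huval : ∀ j, ∫ z, u j z ∂q = w j ^ 2 := fun j => by
    have h := integral_prod_mul (μ := γ.fst) (ν := γ.snd) (fun x => (f j x).toReal)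
      (fun y => (g j y).toReal)
    refine h.trans ?_
    rw [Measure.integral_toReal_rnDeriv (Measure.absolutelyContinuous_of_le (hfle j)),
      Measure.integral_toReal_rnDeriv (Measure.absolutelyContinuous_of_le (hgle j)),
      measureReal_def, measureReal_def, Measure.fst_univ, Measure.snd_univ, ← measureReal_def,
      measureReal_restrict_apply_univ, sq]
  have hInt : Integrable (fun z => ((blockApprox γ κ).rnDeriv q z).toReal *
      log ((blockApprox γ κ).rnDeriv q z).toReal) q := by
    obtain ⟨C, hC⟩ := (isCompact_Icc (a := (0 : ℝ)) (b := ∑ j, (w j)⁻¹)).exists_bound_of_continuousOn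
      Real.continuous_mul_log.continuousOn
    refine Integrable.of_bound (Measurable.aestronglyMeasurable ?_) C ?_
    · have := (Measure.measurable_rnDeriv (blockApprox γ κ) q).ennreal_toReal
      exact this.mul (measurable_log.comp this)
    · filter_upwards [heq, hu1] with z hz hz1
      refine hC _ ⟨ENNReal.toReal_nonneg, ?_⟩
      rw [hz]
      refine Finset.sum_le_sum fun j _ => mul_le_of_le_one_right (inv_nonneg.2 (hw0 j)) ?_
      exact (Finset.single_le_sum (fun i _ => hu0 i z) (Finset.mem_univ j)).trans hz1
  have hac : blockApprox γ κ ≪ q := by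
    rw [blockApprox_eq_withDensity γ κ]
    exact withDensity_absolutelyContinuous _ _
  rw [Ent, if_pos ⟨hac, hInt⟩, EReal.coe_le_coe_iff]
  have hJ : 0 < (Fintype.card J : ℝ) := by
    have : Nonempty (α × β) := nonempty_of_isProbabilityMeasure γ
    have : Nonempty J := this.map κ
    exact_mod_cast Fintype.card_pos
  calc _ ≤ ∫ z, ∑ j, (w j)⁻¹ * log (w j)⁻¹ * u j z ∂q := by
        refine integral_mono_ae hInt (integrable_finsetSum _ fun j _ => (huint j).const_mul _) ?_
        filter_upwards [heq, hu1] with z hz hz1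
        simp only [hz]
        exact mul_log_sum_le (fun j => inv_nonneg.2 (hw0 j)) (fun j => hu0 j z) hz1
    _ = ∑ j, (w j)⁻¹ * log (w j)⁻¹ * w j ^ 2 := by
        rw [integral_finsetSum _ fun j _ => (huint j).const_mul _]
        simp_rw [integral_const_mul, huval]
    _ ≤ ∑ j, (w j * log (Fintype.card J) + (Fintype.card J : ℝ)⁻¹ - w j) := by
        refine Finset.sum_le_sum fun j _ => ?_
        rcases (hw0 j).eq_or_lt with h | h
        · rw [← h]; simp
        · have h1 := log_le_sub_one_of_pos (inv_pos.2 (mul_pos hJ h))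
          rw [log_inv, log_mul hJ.ne' h.ne'] at h1
          have h2 := mul_le_mul_of_nonneg_left h1 h.le
          have h3 : w j * ((Fintype.card J * w j)⁻¹ - 1) = (Fintype.card J : ℝ)⁻¹ - w j := by
            field_simp
          have h4 : (w j)⁻¹ * log (w j)⁻¹ * w j ^ 2 = w j * - log (w j) := by
            rw [log_inv]; field_simp
          rw [h3] at h2
          rw [h4]
          linarith
    _ = log (Fintype.card J) := by
        rw [Finset.sum_sub_distrib, Finset.sum_add_distrib, ← Finset.sum_mul,
          sum_real_preimage_singleton γ hκ, Finset.sum_const, Finset.card_univ, nsmul_eq_mul,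
          mul_inv_cancel₀ hJ.ne']
        ring

end blockApprox

theorem exists_ball_cross_difference_sub_le {F G : Type*} [NormedAddCommGroup F] [NormedSpace ℝ F]
    [NormedAddCommGroup G] [NormedSpace ℝ G] {c : F × G → ℝ} {x₀ : F} {y₀ : G}
    (hc : ContDiffAt ℝ 2 c (x₀, y₀)) {η : ℝ} (hη : 0 < η) :
    ∃ r > 0, ∀ x ∈ Metric.ball x₀ r, ∀ x' ∈ Metric.ball x₀ r, ∀ y ∈ Metric.ball y₀ r,
      ∀ y' ∈ Metric.ball y₀ r,
      |c (x, y) + c (x', y') - c (x, y') - c (x', y) -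
        fderiv ℝ (fderiv ℝ c) (x₀, y₀) (0, y - y') (x - x', 0)| ≤ η * ‖x - x'‖ * ‖y - y'‖ := by
  have hs : HasStrictFDerivAt (fderiv ℝ c) (fderiv ℝ (fderiv ℝ c) (x₀, y₀)) (x₀, y₀) :=
    (hc.fderiv_right (m := 1) (by norm_num)).hasStrictFDerivAt one_ne_zero
  have hd : ∀ᶠ p in 𝓝 (x₀, y₀), DifferentiableAt ℝ c p :=
    (hc.eventually (by simp)).mono fun p hp => hp.differentiableAt (by norm_num)
  obtain ⟨r₁, hr₁, h₁⟩ := Metric.eventually_nhds_iff_ball.1 hd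
  obtain ⟨r₂, hr₂, h₂⟩ := Metric.eventually_nhds_iff_ball.1 (hs.isLittleO.def hη)
  refine ⟨min r₁ r₂, lt_min hr₁ hr₂, fun x hx x' hx' y hy y' hy' => ?_⟩
  have hmem : ∀ {z : F} {w : G}, z ∈ Metric.ball x₀ (min r₁ r₂) → w ∈ Metric.ball y₀ (min r₁ r₂) →
      (z, w) ∈ Metric.ball (x₀, y₀) (min r₁ r₂) := fun hz hw => by
    rw [← ball_prod_same]; exact ⟨hz, hw⟩
  have hder : ∀ w ∈ Metric.ball y₀ (min r₁ r₂), ∀ z ∈ Metric.ball x₀ (min r₁ r₂),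
      HasFDerivAt (fun z => c (z, w)) ((fderiv ℝ c (z, w)).comp (ContinuousLinearMap.inl ℝ F G)) z :=
    fun w hw z hz => by
      have h := (h₁ _ (Metric.ball_subset_ball (min_le_left _ _) (hmem hz hw))).hasFDerivAt
      exact h.comp z (hasFDerivAt_prodMk_left z w)
  have key := (convex_ball x₀ (min r₁ r₂)).norm_image_sub_le_of_norm_hasFDerivWithin_le'
    (f := fun z => c (z, y) - c (z, y'))
    (φ := (fderiv ℝ (fderiv ℝ c) (x₀, y₀) (0, y - y')).comp (ContinuousLinearMap.inl ℝ F G))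
    (C := η * ‖y - y'‖)
    (fun z hz => ((hder y hy z hz).sub (hder y' hy' z hz)).hasFDerivWithinAt) (fun z hz => by
      have h := h₂ ((z, y), (z, y')) (by
        rw [← ball_prod_same]
        exact ⟨Metric.ball_subset_ball (min_le_right _ _) (hmem hz hy),
          Metric.ball_subset_ball (min_le_right _ _) (hmem hz hy')⟩)
      simp only [Prod.mk_sub_mk, sub_self] at h
      rw [Prod.norm_mk, norm_zero, max_eq_right (norm_nonneg _)] at h
      rw [← ContinuousLinearMap.sub_comp, ← ContinuousLinearMap.sub_comp]
      refine (ContinuousLinearMap.opNorm_comp_le _ _).trans ?_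
      exact (mul_le_of_le_one_right (norm_nonneg _)
        (ContinuousLinearMap.norm_inl_le_one ℝ F G)).trans h) hx' hx
  rw [Real.norm_eq_abs] at key
  convert key using 1
  · congr 1
    simp
    ring
  · ring

theorem crossDeriv_apply {d : ℕ}
    {c : EuclideanSpace ℝ (Fin d) × EuclideanSpace ℝ (Fin d) → ℝ} {x y : EuclideanSpace ℝ (Fin d)}
    (hc : ContDiffAt ℝ 2 c (x, y)) (i j : Fin d) :
    crossDeriv c x y i j = fderiv ℝ (fderiv ℝ c) (x, y) (0, EuclideanSpace.single j 1)
      (EuclideanSpace.single i 1, 0) := by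
  have hd : ∀ᶠ p in 𝓝 (x, y), DifferentiableAt ℝ c p :=
    (hc.eventually (by simp)).mono fun p hp => hp.differentiableAt (by norm_num)
  have hev : (fun y' => fderiv ℝ (fun x' => c (x', y')) x (EuclideanSpace.single i 1)) =ᶠ[𝓝 y]
      fun y' => fderiv ℝ c (x, y') (EuclideanSpace.single i 1, 0) := by
    have ht : Tendsto (fun y' => (x, y')) (𝓝 y) (𝓝 (x, y)) := by
      exact (Continuous.prodMk_right x).tendsto y
    filter_upwards [ht.eventually hd] with y' hy'
    have h : HasFDerivAt (fun x' => c (x', y')) _ x :=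
      hy'.hasFDerivAt.comp x (hasFDerivAt_prodMk_left x y')
    rw [h.fderiv]
    simp
  have h2 : HasFDerivAt (fderiv ℝ c) (fderiv ℝ (fderiv ℝ c) (x, y)) (x, y) :=
    ((hc.fderiv_right (m := 1) (by norm_num)).differentiableAt one_ne_zero).hasFDerivAt
  have h3 : HasFDerivAt (fun y' => fderiv ℝ c (x, y')) _ y :=
    h2.comp y (hasFDerivAt_prodMk_right x y)
  have h4 := h3.clm_apply (hasFDerivAt_const
    ((EuclideanSpace.single i 1, 0) : EuclideanSpace ℝ (Fin d) × EuclideanSpace ℝ (Fin d)) y)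
  rw [crossDeriv, Matrix.of_apply, hev.fderiv_eq, h4.fderiv]
  simp

/-- Near a point where `c` is infinitesimally twisted, the cross difference of `c` is, in suitable
linear coordinates, the inner product up to a small relative error. -/
theorem exists_linear_cross_difference {d : ℕ}
    {c : EuclideanSpace ℝ (Fin d) × EuclideanSpace ℝ (Fin d) → ℝ} {x₀ y₀ : EuclideanSpace ℝ (Fin d)}
    (hc : ContDiffAt ℝ 2 c (x₀, y₀)) (hdet : (crossDeriv c x₀ y₀).det ≠ 0) :
    ∃ A : EuclideanSpace ℝ (Fin d) ≃L[ℝ] EuclideanSpace ℝ (Fin d), ∃ r > 0,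
      ∀ x ∈ Metric.ball x₀ r, ∀ x' ∈ Metric.ball x₀ r, ∀ y ∈ Metric.ball y₀ r,
      ∀ y' ∈ Metric.ball y₀ r,
      |c (x, y) + c (x', y') - c (x, y') - c (x', y) - inner ℝ (x - x') (A (y - y'))| ≤
        1 / 2 * ‖x - x'‖ * ‖A (y - y')‖ := by
  set H := fderiv ℝ (fderiv ℝ c) (x₀, y₀) with hH
  let A₀ : EuclideanSpace ℝ (Fin d) →ₗ[ℝ] EuclideanSpace ℝ (Fin d) :=
    { toFun := fun k => WithLp.toLp 2 fun i => H (0, k) (EuclideanSpace.single i 1, 0)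
      map_add' := fun k k' => by
        ext i
        have : ((0, k + k') : EuclideanSpace ℝ (Fin d) × EuclideanSpace ℝ (Fin d)) =
          (0, k) + (0, k') := by simp
        change H (0, k + k') _ = H (0, k) _ + H (0, k') _
        rw [this, map_add]
        rfl
      map_smul' := fun a k => by
        ext i
        have : ((0, a • k) : EuclideanSpace ℝ (Fin d) × EuclideanSpace ℝ (Fin d)) =
          a • (0, k) := by simp
        change H (0, a • k) _ = a • H (0, k) _
        rw [this, map_smul]
        rfl }
  have hA₀ : ∀ k i, A₀ k i = H (0, k) (EuclideanSpace.single i 1, 0) := fun k i => rfl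
  have hsum : ∀ h : EuclideanSpace ℝ (Fin d), h = ∑ i, h i • EuclideanSpace.single i (1 : ℝ) :=
    fun h => by
      ext j
      simp [Finset.sum_apply, Pi.single_apply]
  have hinner : ∀ h k, inner ℝ h (A₀ k) = H (0, k) (h, 0) := fun h k => by
    have : ((h, 0) : EuclideanSpace ℝ (Fin d) × EuclideanSpace ℝ (Fin d)) =
        ∑ i, h i • (EuclideanSpace.single i 1, 0) := by
      ext1
      · simp only [Prod.fst_sum, Prod.smul_fst]
        exact hsum h
      · simp [Prod.snd_sum]
    rw [this, map_sum, PiLp.inner_apply]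
    refine Finset.sum_congr rfl fun i _ => ?_
    rw [hA₀, map_smul, smul_eq_mul]
    simp [mul_comm]
  have hinj : Function.Injective A₀ := by
    rw [injective_iff_map_eq_zero]
    intro k hk
    have h0 : (crossDeriv c x₀ y₀).mulVec (fun j => k j) = 0 := by
      ext i
      have h1 : A₀ k i = 0 := by rw [hk]; rfl
      have h2 : ((0, k) : EuclideanSpace ℝ (Fin d) × EuclideanSpace ℝ (Fin d)) =
          ∑ j, k j • (0, EuclideanSpace.single j 1) := by
        ext1
        · simp [Prod.fst_sum]
        · simp only [Prod.snd_sum, Prod.smul_snd]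
          exact hsum k
      rw [hA₀, h2, map_sum, sum_apply] at h1
      rw [Matrix.mulVec, dotProduct, Pi.zero_apply, ← h1]
      refine Finset.sum_congr rfl fun j _ => ?_
      rw [crossDeriv_apply hc, map_smul, smul_apply, smul_eq_mul, mul_comm]
    have h3 := Matrix.eq_zero_of_mulVec_eq_zero hdet h0
    ext j
    exact congrFun h3 j
  let A := (LinearEquiv.ofInjectiveEndo A₀ hinj).toContinuousLinearEquiv
  have hA : ∀ k, A k = A₀ k := fun k => rfl
  have hN : 0 < ‖(A.symm : EuclideanSpace ℝ (Fin d) →L[ℝ] EuclideanSpace ℝ (Fin d))‖ + 1 := by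
    positivity
  obtain ⟨r, hr, h⟩ := exists_ball_cross_difference_sub_le hc (div_pos one_half_pos hN)
  refine ⟨A, r, hr, fun x hx x' hx' y hy y' hy' => ?_⟩
  rw [hA, hinner, ← hA]
  refine (h x hx x' hx' y hy y' hy').trans ?_
  have h1 : ‖y - y'‖ ≤ (‖(A.symm : EuclideanSpace ℝ (Fin d) →L[ℝ] EuclideanSpace ℝ (Fin d))‖ + 1) *
      ‖A (y - y')‖ := by
    have := (A.symm : EuclideanSpace ℝ (Fin d) →L[ℝ] EuclideanSpace ℝ (Fin d)).le_opNorm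
      (A (y - y'))
    simp only [ContinuousLinearEquiv.coe_coe, ContinuousLinearEquiv.symm_apply_apply] at this
    linarith [norm_nonneg (A (y - y'))]
  calc _ ≤ 1 / 2 / _ * ‖x - x'‖ * (_ * ‖A (y - y')‖) := by gcongr
    _ = _ := by field_simp

/-- A finite cover of `s × t` by products of sets on each of which the cross difference of `c` is
comparable to an inner product. -/
structure TwistCover {d : ℕ} (s t : Set (EuclideanSpace ℝ (Fin d)))
    (c : EuclideanSpace ℝ (Fin d) × EuclideanSpace ℝ (Fin d) → ℝ) (ι : Type*) where
  A : ι → EuclideanSpace ℝ (Fin d) ≃L[ℝ] EuclideanSpace ℝ (Fin d)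
  U : ι → Set (EuclideanSpace ℝ (Fin d))
  V : ι → Set (EuclideanSpace ℝ (Fin d))
  measurableSet_U : ∀ i, MeasurableSet (U i)
  measurableSet_V : ∀ i, MeasurableSet (V i)
  U_subset : ∀ i, U i ⊆ s
  V_subset : ∀ i, V i ⊆ t
  cover : ∀ p ∈ s ×ˢ t, ∃ i, p ∈ U i ×ˢ V i
  abs_sub_le : ∀ i, ∀ x ∈ U i, ∀ x' ∈ U i, ∀ y ∈ V i, ∀ y' ∈ V i,
    |c (x, y) + c (x', y') - c (x, y') - c (x', y) - inner ℝ (x - x') (A i (y - y'))| ≤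
      1 / 2 * ‖x - x'‖ * ‖A i (y - y')‖

theorem exists_twistCover {d : ℕ} {s t : Set (EuclideanSpace ℝ (Fin d))} (hs : IsCompact s)
    (ht : IsCompact t) {c : EuclideanSpace ℝ (Fin d) × EuclideanSpace ℝ (Fin d) → ℝ}
    (hc : ∀ x ∈ s, ∀ y ∈ t, ContDiffAt ℝ 2 c (x, y))
    (hdet : ∀ x ∈ s, ∀ y ∈ t, (crossDeriv c x y).det ≠ 0) :
    ∃ T : Finset (EuclideanSpace ℝ (Fin d) × EuclideanSpace ℝ (Fin d)),
      Nonempty (TwistCover s t c T) := by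
  choose! A r hr h using fun (p : EuclideanSpace ℝ (Fin d) × EuclideanSpace ℝ (Fin d))
    (hp : p ∈ s ×ˢ t) => exists_linear_cross_difference (hc p.1 hp.1 p.2 hp.2)
      (hdet p.1 hp.1 p.2 hp.2)
  obtain ⟨T, hT, hcov⟩ := (hs.prod ht).elim_nhds_subcover (fun p => Metric.ball p (r p))
    (fun p hp => Metric.ball_mem_nhds p (hr p hp))
  refine ⟨T, ⟨{ A := fun i => A i
                U := fun i => s ∩ Metric.ball i.1.1 (r i)
                V := fun i => t ∩ Metric.ball i.1.2 (r i)
                measurableSet_U := fun i => hs.measurableSet.inter measurableSet_ball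
                measurableSet_V := fun i => ht.measurableSet.inter measurableSet_ball
                U_subset := fun i => inter_subset_left
                V_subset := fun i => inter_subset_left
                cover := fun p hp => ?_
                abs_sub_le := fun i x hx x' hx' y hy y' hy' =>
                  h i (hT i i.2) x hx.2 x' hx'.2 y hy.2 y' hy'.2 }⟩⟩
  obtain ⟨q, hq, hpq⟩ := mem_iUnion₂.1 (hcov hp)
  rw [← ball_prod_same] at hpq
  exact ⟨⟨q, hq⟩, ⟨hp.1, hpq.1⟩, ⟨hp.2, hpq.2⟩⟩

theorem exists_measurable_selection_of_cover {X ι : Type*} [MeasurableSpace X] [Finite ι]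
    [Nonempty ι] [MeasurableSpace ι] {b : ι → Set X} (hb : ∀ i, MeasurableSet (b i)) :
    ∃ f : X → ι, Measurable f ∧ ∀ x i, x ∈ b i → x ∈ b (f x) := by
  cases nonempty_fintype ι
  suffices h : ∀ F : Finset ι, ∃ f : X → ι, Measurable f ∧ ∀ x, ∀ i ∈ F, x ∈ b i → x ∈ b (f x) by
    obtain ⟨f, hf, h⟩ := h Finset.univ
    exact ⟨f, hf, fun x i => h x i (Finset.mem_univ i)⟩
  intro F
  induction F using Finset.induction_on with
  | empty => exact ⟨fun _ => Classical.arbitrary ι, measurable_const, by simp⟩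
  | insert a F _ ih =>
    obtain ⟨f, hf, h⟩ := ih
    refine ⟨fun x => if x ∈ b a then a else f x, Measurable.ite (hb a) measurable_const hf,
      fun x i hi hx => ?_⟩
    dsimp only
    split_ifs with hxa
    · exact hxa
    · rcases Finset.mem_insert.1 hi with rfl | hi
      · exact absurd hx hxa
      · exact h x i hi hx

/-- A ball of radius `R` splits into at most `((2R+1)/δ)^d` pieces of diameter at most `√d δ`. -/
theorem exists_cube_index {d : ℕ} {R δ : ℝ} (hR : 0 ≤ R) (hδ : 0 < δ) (hδ1 : δ ≤ 1) :
    ∃ m : ℕ, 0 < m ∧ (m : ℝ) ≤ (2 * R + 1) / δ ∧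
      ∃ f : EuclideanSpace ℝ (Fin d) → Fin d → Fin m, Measurable f ∧
        ∀ q q', ‖q‖ ≤ R → ‖q'‖ ≤ R → f q = f q' → ‖q - q'‖ ^ 2 ≤ d * δ ^ 2 := by
  set m := ⌊2 * R / δ⌋₊ + 1 with hm
  have hm0 : 0 < m := Nat.succ_pos _
  refine ⟨m, hm0, ?_, fun q k => ⟨⌊(q k + R) / δ⌋₊ % m, Nat.mod_lt _ hm0⟩, ?_, ?_⟩
  · rw [hm, Nat.cast_add, Nat.cast_one, add_div]
    gcongr
    · exact Nat.floor_le (by positivity)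
    · rwa [le_div_iff₀ hδ, one_mul]
  · refine measurable_pi_lambda _ fun k => ?_
    have h1 : Measurable fun q : EuclideanSpace ℝ (Fin d) => ⌊(q k + R) / δ⌋₊ :=
      Nat.measurable_floor.comp (by fun_prop)
    exact (measurable_from_nat (f := fun n : ℕ => (⟨n % m, Nat.mod_lt _ hm0⟩ : Fin m))).comp h1
  · intro q q' hq hq' h
    have hco : ∀ (z : EuclideanSpace ℝ (Fin d)), ‖z‖ ≤ R → ∀ k,
        0 ≤ (z k + R) / δ ∧ ⌊(z k + R) / δ⌋₊ < m := fun z hz k => by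
      have h1 := (PiLp.norm_apply_le z k).trans hz
      rw [Real.norm_eq_abs, abs_le] at h1
      refine ⟨div_nonneg (by linarith) hδ.le, Nat.lt_succ_of_le (Nat.floor_mono ?_)⟩
      gcongr
      linarith
    rw [EuclideanSpace.norm_sq_eq]
    calc _ ≤ ∑ k : Fin d, δ ^ 2 := by
          refine Finset.sum_le_sum fun k _ => ?_
          have h2 := congrArg Fin.val (congrFun h k)
          obtain ⟨hz, hlt⟩ := hco q hq k
          obtain ⟨hz', hlt'⟩ := hco q' hq' k
          simp only [Nat.mod_eq_of_lt hlt, Nat.mod_eq_of_lt hlt'] at h2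
          have h3 := Nat.floor_le hz
          have h4 := Nat.lt_floor_add_one ((q k + R) / δ)
          have h3' := Nat.floor_le hz'
          have h4' := Nat.lt_floor_add_one ((q' k + R) / δ)
          rw [← h2] at h3' h4'
          rw [le_div_iff₀ hδ] at h3 h3'
          rw [div_lt_iff₀ hδ] at h4 h4'
          rw [sq_le_sq, PiLp.sub_apply, Real.norm_eq_abs, abs_abs, abs_of_pos hδ, abs_le]
          constructor <;> nlinarith
      _ = d * δ ^ 2 := by simp

theorem TwistCover.exists_norm_sub_le {d : ℕ} {ι : Type*} [Finite ι]
    {s t : Set (EuclideanSpace ℝ (Fin d))}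
    {c : EuclideanSpace ℝ (Fin d) × EuclideanSpace ℝ (Fin d) → ℝ} (C : TwistCover s t c ι)
    (hs : IsCompact s) (ht : IsCompact t) :
    ∃ R, 0 ≤ R ∧ ∀ i, ∀ x ∈ s, ∀ y ∈ t, ‖x - C.A i y‖ ≤ R := by
  cases nonempty_fintype ι
  choose R hR using fun i => (hs.prod ht).exists_bound_of_continuousOn
    (f := fun p : EuclideanSpace ℝ (Fin d) × EuclideanSpace ℝ (Fin d) => p.1 - C.A i p.2)
    (by fun_prop)
  refine ⟨∑ i, |R i|, Finset.sum_nonneg fun i _ => abs_nonneg _, fun i x hx y hy => ?_⟩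
  exact (hR i (x, y) ⟨hx, hy⟩).trans ((le_abs_self _).trans
    (Finset.single_le_sum (f := fun i => |R i|) (fun i _ => abs_nonneg _) (Finset.mem_univ i)))

theorem neg_cross_difference_le {d : ℕ} {h k : EuclideanSpace ℝ (Fin d)} {D : ℝ}
    (habs : |D - inner ℝ h k| ≤ 1 / 2 * ‖h‖ * ‖k‖) : -D ≤ 3 / 2 * ‖h - k‖ ^ 2 := by
  have h1 := abs_le.1 habs
  have h2 := norm_sub_sq_real h k
  nlinarith [sq_nonneg (‖h‖ - ‖k‖), mul_nonneg (norm_nonneg h) (norm_nonneg k),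
    real_inner_le_norm h k]

theorem entCost_fst_snd_le {α β : Type*} [MeasurableSpace α] [MeasurableSpace β]
    (γ : Measure (α × β)) [hγ : IsProbabilityMeasure γ] (c : α × β → ℝ) (ε : ℝ) :
    entCost γ.fst γ.snd c ε ≤
      ((∫ p, c p ∂γ : ℝ) : EReal) + (ε : EReal) * Ent γ (γ.fst.prod γ.snd) :=
  sInf_le ⟨γ, hγ, rfl, rfl, rfl⟩

theorem exists_entCost_le {d : ℕ} {ι : Type*} [Fintype ι]
    {s t : Set (EuclideanSpace ℝ (Fin d))}
    {c : EuclideanSpace ℝ (Fin d) × EuclideanSpace ℝ (Fin d) → ℝ} (C : TwistCover s t c ι)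
    (hs : IsCompact s) (ht : IsCompact t) (hc : Measurable c) {B : ℝ} (hB : ∀ p, |c p| ≤ B)
    {γ : Measure (EuclideanSpace ℝ (Fin d) × EuclideanSpace ℝ (Fin d))} [IsProbabilityMeasure γ]
    (hS : ∀ᵐ p ∂γ, p ∈ s ×ˢ t) :
    ∃ M, 0 ≤ M ∧ ∀ ε ∈ Ioo (0 : ℝ) 1, entCost γ.fst γ.snd c ε ≤
      ((∫ p, c p ∂γ + ((d : ℝ) / 2 * ε * log (1 / ε) + M * ε) : ℝ) : EReal) := by
  obtain ⟨R, hR0, hR⟩ := C.exists_norm_sub_le hs ht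
  obtain ⟨p₀, hp₀⟩ : (s ×ˢ t).Nonempty := hS.exists
  have : Nonempty ι := ⟨(C.cover p₀ hp₀).choose⟩
  let _ : MeasurableSpace ι := ⊤
  have : MeasurableSingletonClass ι := ⟨fun _ => trivial⟩
  obtain ⟨κ₁, hκ₁, hκ₁mem⟩ := exists_measurable_selection_of_cover
    (b := fun i => C.U i ×ˢ C.V i) fun i => (C.measurableSet_U i).prod (C.measurableSet_V i)
  have hκ₁S : ∀ p ∈ s ×ˢ t, p ∈ C.U (κ₁ p) ×ˢ C.V (κ₁ p) := fun p hp => by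
    obtain ⟨i, hi⟩ := C.cover p hp
    exact hκ₁mem p i hi
  have hcard : (1 : ℝ) ≤ Fintype.card ι := by exact_mod_cast Fintype.card_pos
  refine ⟨3 / 4 * d + (log (Fintype.card ι) + d * log (2 * R + 1)), ?_, fun ε hε => ?_⟩
  · have h1 := log_nonneg hcard
    have h2 : 0 ≤ log (2 * R + 1) := log_nonneg (by linarith)
    positivity
  have hδ : 0 < √ε := sqrt_pos.2 hε.1
  obtain ⟨m, hm, hmle, f, hf, hfle⟩ := exists_cube_index (d := d) hR0 hδ
    (sqrt_le_one.2 hε.2.le)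
  have hAm : ∀ i, Measurable fun p : EuclideanSpace ℝ (Fin d) × EuclideanSpace ℝ (Fin d) =>
      p.1 - C.A i p.2 := fun i =>
    measurable_fst.sub ((C.A i).continuous.measurable.comp measurable_snd)
  have hq : Measurable fun p => p.1 - C.A (κ₁ p) p.2 := by
    have : Measurable fun z : ι × (EuclideanSpace ℝ (Fin d) × EuclideanSpace ℝ (Fin d)) =>
      z.2.1 - C.A z.1 z.2.2 := measurable_from_prod_countable_right hAm
    exact this.comp (hκ₁.prodMk measurable_id)
  set κ : EuclideanSpace ℝ (Fin d) × EuclideanSpace ℝ (Fin d) → ι × (Fin d → Fin m) :=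
    fun p => (κ₁ p, f (p.1 - C.A (κ₁ p) p.2)) with hκdef
  have hκ : Measurable κ := hκ₁.prodMk (hf.comp hq)
  have hprob : IsProbabilityMeasure (blockApprox γ κ) := ⟨by
    rw [← Measure.fst_univ, fst_blockApprox γ hκ, Measure.fst_univ, measure_univ]⟩
  have hcost := integral_blockApprox_le γ hκ hc hB hS (Δ := 3 / 4 * (d * √ε ^ 2))
    (fun p hp p' hp' hpp => by
      obtain ⟨h1, h2⟩ := Prod.ext_iff.1 hpp
      simp only [hκdef] at h1 h2
      have hm1 := hκ₁S p hp
      have hm2 := hκ₁S p' hp'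
      rw [← h1] at h2 hm2
      have h3 := hfle _ _ (hR _ _ hp.1 _ hp.2) (hR _ _ hp'.1 _ hp'.2) h2
      have h4 := neg_cross_difference_le
        (C.abs_sub_le (κ₁ p) p.1 hm1.1 p'.1 hm2.1 p.2 hm1.2 p'.2 hm2.2)
      rw [map_sub, sub_sub_sub_comm] at h4
      simp only [Prod.mk.eta] at h4
      linarith)
  have hEnt := Ent_blockApprox_le γ hκ
  have hlog : log (Fintype.card (ι × (Fin d → Fin m))) ≤
      log (Fintype.card ι) + d * log (2 * R + 1) + d / 2 * log (1 / ε) := by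
    have hm0 : (0 : ℝ) < m := by exact_mod_cast hm
    rw [Fintype.card_prod, Fintype.card_fun, Fintype.card_fin, Fintype.card_fin, Nat.cast_mul,
      Nat.cast_pow, log_mul (by positivity) (by positivity), log_pow]
    have h1 := log_le_log hm0 hmle
    rw [log_div (by positivity) hδ.ne', log_sqrt hε.1.le] at h1
    rw [one_div, log_inv]
    have h2 := mul_le_mul_of_nonneg_left h1 (Nat.cast_nonneg (α := ℝ) d)
    linarith
  have hEnt' : (ε : EReal) * Ent (blockApprox γ κ) (γ.fst.prod γ.snd) ≤
      ((ε * (log (Fintype.card ι) + d * log (2 * R + 1) + d / 2 * log (1 / ε)) : ℝ) : EReal) := by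
    rw [EReal.coe_mul]
    exact mul_le_mul_of_nonneg_left (hEnt.trans (EReal.coe_le_coe_iff.2 hlog))
      (EReal.coe_nonneg.2 hε.1.le)
  have hle := entCost_fst_snd_le (blockApprox γ κ) c ε
  rw [fst_blockApprox γ hκ, snd_blockApprox γ hκ] at hle
  refine hle.trans ?_
  refine (add_le_add (EReal.coe_le_coe_iff.2 hcost) hEnt').trans ?_
  rw [← EReal.coe_add, EReal.coe_le_coe_iff, sq_sqrt hε.1.le]
  apply le_of_eq
  ring

theorem lintegral_exp_neg_mul_sq_norm_sub {d : ℕ} {b : ℝ} (hb : 0 < b)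
    (z : EuclideanSpace ℝ (Fin d)) :
    ∫⁻ x, ENNReal.ofReal (exp (-b * ‖x - z‖ ^ 2)) =
      ENNReal.ofReal ((Real.pi / b) ^ ((d : ℝ) / 2)) := by
  have h := GaussianFourier.integral_rexp_neg_mul_sq_norm (V := EuclideanSpace ℝ (Fin d)) hb
  rw [finrank_euclideanSpace_fin] at h
  have hpos : 0 < (Real.pi / b) ^ ((d : ℝ) / 2) := rpow_pos_of_pos (by positivity) _
  have hInt : Integrable fun x : EuclideanSpace ℝ (Fin d) => exp (-b * ‖x‖ ^ 2) :=
    Integrable.of_integral_ne_zero (h ▸ hpos.ne')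
  rw [lintegral_sub_right_eq_self (fun x => ENNReal.ofReal (exp (-b * ‖x‖ ^ 2))) z, ← h,
    ofReal_integral_eq_lintegral_ofReal hInt (ae_of_all _ fun x => (exp_pos _).le)]

/-- A function whose pairwise sums dominate `½‖x - x'‖²` has Gaussian-type exponential integrals. -/
theorem lintegral_indicator_exp_neg_le {d : ℕ} {T : Set (EuclideanSpace ℝ (Fin d))}
    {e : EuclideanSpace ℝ (Fin d) → ℝ} {ε : ℝ} (hε : 0 < ε)
    (he : ∀ x ∈ T, ∀ x' ∈ T, 1 / 2 * ‖x - x'‖ ^ 2 ≤ e x + e x') :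
    ∫⁻ x, T.indicator (fun x => ENNReal.ofReal (exp (-(e x / ε)))) x ≤
      ENNReal.ofReal (exp (1 / 2) * (4 * Real.pi * ε) ^ ((d : ℝ) / 2)) := by
  rcases T.eq_empty_or_nonempty with rfl | hT
  · simp
  have he0 : ∀ x ∈ T, 0 ≤ e x := fun x hx => by
    have := he x hx x hx
    rw [sub_self, norm_zero] at this
    linarith
  obtain ⟨z, hz, hzmin⟩ : ∃ z ∈ T, ∀ x ∈ T, e z ≤ e x + ε := by
    have hbdd : BddBelow (e '' T) := ⟨0, by rintro _ ⟨x, hx, rfl⟩; exact he0 x hx⟩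
    obtain ⟨_, ⟨z, hz, rfl⟩, hlt⟩ := exists_lt_of_csInf_lt (hT.image e)
      (lt_add_of_pos_right (sInf (e '' T)) hε)
    exact ⟨z, hz, fun x hx => hlt.le.trans (by gcongr; exact csInf_le hbdd ⟨x, hx, rfl⟩)⟩
  have hb : 0 < 1 / (4 * ε) := by positivity
  calc _ ≤ ∫⁻ x, ENNReal.ofReal (exp (1 / 2)) *
        ENNReal.ofReal (exp (-(1 / (4 * ε)) * ‖x - z‖ ^ 2)) := by
        refine lintegral_mono (indicator_le fun x hx => ?_)
        rw [← ENNReal.ofReal_mul (exp_pos _).le, ← exp_add]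
        refine ENNReal.ofReal_le_ofReal (exp_le_exp.2 ?_)
        have h1 := he x hx z hz
        have h2 := hzmin x hx
        have h3 : 1 / 2 + -(1 / (4 * ε)) * ‖x - z‖ ^ 2 = -((‖x - z‖ ^ 2 / 4 - ε / 2) / ε) := by
          field_simp
          ring
        rw [h3, neg_le_neg_iff]
        gcongr
        linarith
    _ = _ := by
        rw [lintegral_const_mul' _ _ ENNReal.ofReal_ne_top,
          lintegral_exp_neg_mul_sq_norm_sub hb, ← ENNReal.ofReal_mul (exp_pos _).le]
        congr 3
        field_simp

theorem exists_lintegral_eq_mul_comp_symm {F : Type*} [NormedAddCommGroup F] [NormedSpace ℝ F]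
    [FiniteDimensional ℝ F] [MeasurableSpace F] [BorelSpace F] (μ : Measure F)
    [μ.IsAddHaarMeasure] (A : F ≃L[ℝ] F) :
    ∃ K : ℝ≥0∞, K ≠ ⊤ ∧ ∀ g : F → ℝ≥0∞, Measurable g →
      ∫⁻ y, g y ∂μ = K * ∫⁻ z, g (A.symm z) ∂μ := by
  have hdet : LinearMap.det (A.symm.toLinearEquiv : F →ₗ[ℝ] F) ≠ 0 :=
    (LinearEquiv.isUnit_det' _).ne_zero
  have hmap := Measure.map_linearMap_addHaar_eq_smul_addHaar μ hdet
  set k := ENNReal.ofReal |(LinearMap.det (A.symm.toLinearEquiv : F →ₗ[ℝ] F))⁻¹| with hk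
  have hk0 : k ≠ 0 := by
    rw [hk, Ne, ENNReal.ofReal_eq_zero, not_le]
    positivity
  refine ⟨k⁻¹, ENNReal.inv_ne_top.2 hk0, fun g hg => ?_⟩
  have h : ∫⁻ z, g (A.symm z) ∂μ = k * ∫⁻ y, g y ∂μ := by
    rw [← smul_eq_mul, ← lintegral_smul_measure, ← hmap]
    exact (lintegral_map hg A.symm.continuous.measurable).symm
  rw [h, ← mul_assoc, ENNReal.inv_mul_cancel hk0 ENNReal.ofReal_ne_top, one_mul]

theorem TwistCover.exists_lintegral_le {d : ℕ} {ι : Type*}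
    {s t : Set (EuclideanSpace ℝ (Fin d))}
    {c : EuclideanSpace ℝ (Fin d) × EuclideanSpace ℝ (Fin d) → ℝ} (C : TwistCover s t c ι)
    (hc : Measurable c) {R : ℝ} (hR : ∀ i, ∀ x ∈ s, ∀ y ∈ t, ‖x - C.A i y‖ ≤ R) (i : ι) :
    ∃ K : ℝ≥0∞, K ≠ ⊤ ∧ ∀ ε > 0, ∀ φ ψ : EuclideanSpace ℝ (Fin d) → ℝ, Measurable φ →
      Measurable ψ → (∀ x ∈ s, ∀ y ∈ t, φ x + ψ y ≤ c (x, y)) →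
      ∫⁻ p in C.U i ×ˢ C.V i, ENNReal.ofReal (exp (-((c p - φ p.1 - ψ p.2) / ε)))
          ∂((volume : Measure (EuclideanSpace ℝ (Fin d))).prod volume) ≤
        K * ENNReal.ofReal (exp (1 / 2) * (4 * Real.pi * ε) ^ ((d : ℝ) / 2)) := by
  obtain ⟨K, hK, hcv⟩ := exists_lintegral_eq_mul_comp_symm
    (volume : Measure (EuclideanSpace ℝ (Fin d))) (C.A i)
  refine ⟨K * volume (Metric.closedBall (0 : EuclideanSpace ℝ (Fin d)) R),
    ENNReal.mul_ne_top hK measure_closedBall_lt_top.ne, fun ε hε φ ψ hφ hψ hle => ?_⟩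
  have hUV : MeasurableSet (C.U i ×ˢ C.V i) := (C.measurableSet_U i).prod (C.measurableSet_V i)
  set g : EuclideanSpace ℝ (Fin d) × EuclideanSpace ℝ (Fin d) → ℝ≥0∞ := (C.U i ×ˢ C.V i).indicator
    fun p => ENNReal.ofReal (exp (-((c p - φ p.1 - ψ p.2) / ε))) with hg
  have hgm : Measurable g := Measurable.indicator (by fun_prop) hUV
  have hgA : Measurable fun p : EuclideanSpace ℝ (Fin d) × EuclideanSpace ℝ (Fin d) =>
      g (p.1, (C.A i).symm (p.1 - p.2)) := hgm.comp (measurable_fst.prodMk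
    ((C.A i).symm.continuous.measurable.comp (measurable_fst.sub measurable_snd)))
  set G := ENNReal.ofReal (exp (1 / 2) * (4 * Real.pi * ε) ^ ((d : ℝ) / 2)) with hG
  have hinner : ∀ b, ∫⁻ x, g (x, (C.A i).symm (x - b)) ≤
      (Metric.closedBall (0 : EuclideanSpace ℝ (Fin d)) R).indicator (fun _ => G) b := fun b => by
    by_cases hb : b ∈ Metric.closedBall (0 : EuclideanSpace ℝ (Fin d)) R
    · rw [indicator_of_mem hb]
      refine le_of_eq_of_le ?_ (lintegral_indicator_exp_neg_le
        (T := {x | (x, (C.A i).symm (x - b)) ∈ C.U i ×ˢ C.V i})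
        (e := fun x => c (x, (C.A i).symm (x - b)) - φ x - ψ ((C.A i).symm (x - b))) hε ?_)
      · rfl
      · intro x hx x' hx'
        have h1 := (abs_le.1 (C.abs_sub_le i x hx.1 x' hx'.1 _ hx.2 _ hx'.2)).1
        have h2 := hle x (C.U_subset i hx.1) _ (C.V_subset i hx'.2)
        have h3 := hle x' (C.U_subset i hx'.1) _ (C.V_subset i hx.2)
        rw [← map_sub, sub_sub_sub_cancel_right, ContinuousLinearEquiv.apply_symm_apply,
          real_inner_self_eq_norm_sq] at h1
        dsimp only at h2 h3
        nlinarith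
    · rw [indicator_of_notMem hb, nonpos_iff_eq_zero, lintegral_eq_zero_iff' ?_]
      · refine ae_of_all _ fun x => indicator_of_notMem (fun hx => hb ?_) _
        have := hR i x (C.U_subset i hx.1) _ (C.V_subset i hx.2)
        simpa using this
      · exact (hgA.comp measurable_prodMk_right).aemeasurable
  calc _ = ∫⁻ x, ∫⁻ y, g (x, y) := by
        rw [← lintegral_indicator hUV, lintegral_prod _ hgm.aemeasurable]
    _ = ∫⁻ x, K * ∫⁻ b, g (x, (C.A i).symm (x - b)) := by
        refine lintegral_congr fun x => ?_
        rw [hcv (fun y => g (x, y)) (hgm.comp measurable_prodMk_left),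
          lintegral_sub_left_eq_self (fun z => g (x, (C.A i).symm z)) x]
    _ = K * ∫⁻ b, ∫⁻ x, g (x, (C.A i).symm (x - b)) := by
        rw [lintegral_const_mul' _ _ hK, lintegral_lintegral_swap hgA.aemeasurable]
    _ ≤ K * ∫⁻ b, (Metric.closedBall (0 : EuclideanSpace ℝ (Fin d)) R).indicator (fun _ => G) b := by
        gcongr with b
        exact hinner b
    _ = _ := by
        rw [lintegral_indicator measurableSet_closedBall, setLIntegral_const]
        ring

theorem le_smul_volume_of_rnDeriv_le {F : Type*} [MeasurableSpace F] {μ ν : Measure F}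
    [SigmaFinite ν] [SigmaFinite μ] (hac : μ ≪ ν) {C : ℝ≥0∞} (h : ∀ᵐ x ∂ν, μ.rnDeriv ν x ≤ C) :
    μ ≤ C • ν := by
  rw [← Measure.withDensity_rnDeriv_eq μ ν hac, ← withDensity_const]
  exact withDensity_mono h

theorem TwistCover.exists_lintegral_exp_le {d : ℕ} {ι : Type*} [Finite ι]
    {s t : Set (EuclideanSpace ℝ (Fin d))}
    {c : EuclideanSpace ℝ (Fin d) × EuclideanSpace ℝ (Fin d) → ℝ} (C : TwistCover s t c ι)
    (hs : IsCompact s) (ht : IsCompact t) (hc : Measurable c)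
    {μ ν : Measure (EuclideanSpace ℝ (Fin d))} [SFinite μ] [SFinite ν]
    (hst : ∀ᵐ p ∂(μ.prod ν), p ∈ s ×ˢ t) {a b : ℝ≥0∞} (ha : a ≠ ⊤) (hb : b ≠ ⊤)
    (hμ : μ ≤ a • volume) (hν : ν ≤ b • volume) :
    ∃ Z, 0 < Z ∧ ∀ ε > 0, ∀ φ ψ : EuclideanSpace ℝ (Fin d) → ℝ, Measurable φ →
      Measurable ψ → (∀ x ∈ s, ∀ y ∈ t, φ x + ψ y ≤ c (x, y)) →
      ∫⁻ p, ENNReal.ofReal (exp (-((c p - φ p.1 - ψ p.2) / ε))) ∂(μ.prod ν) ≤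
        ENNReal.ofReal (Z * ε ^ ((d : ℝ) / 2)) := by
  cases nonempty_fintype ι
  obtain ⟨R, -, hR⟩ := C.exists_norm_sub_le hs ht
  choose K hK hKle using C.exists_lintegral_le hc hR
  have hprod : μ.prod ν ≤ (a * b) •
      (volume : Measure (EuclideanSpace ℝ (Fin d))).prod volume := by
    have : SFinite (b • (volume : Measure (EuclideanSpace ℝ (Fin d)))) := inferInstance
    refine (Measure.prod_mono hμ hν).trans_eq ?_
    rw [Measure.prod_smul_left, Measure.prod_smul_right, smul_smul]
  set L := a * b * ∑ i, K i with hL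
  have hLtop : L ≠ ⊤ := ENNReal.mul_ne_top (ENNReal.mul_ne_top ha hb)
    (ENNReal.sum_ne_top.2 fun i _ => hK i)
  set G : ℝ := exp (1 / 2) * (4 * Real.pi) ^ ((d : ℝ) / 2) with hG
  have hG0 : 0 < G := by positivity
  refine ⟨(L.toReal + 1) * G, by positivity, fun ε hε φ ψ hφ hψ hle => ?_⟩
  set w : EuclideanSpace ℝ (Fin d) × EuclideanSpace ℝ (Fin d) → ℝ≥0∞ :=
    fun p => ENNReal.ofReal (exp (-((c p - φ p.1 - ψ p.2) / ε))) with hw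
  have hGε : exp (1 / 2) * (4 * Real.pi * ε) ^ ((d : ℝ) / 2) = G * ε ^ ((d : ℝ) / 2) := by
    rw [mul_rpow (by positivity) hε.le, hG, mul_assoc]
  calc ∫⁻ p, w p ∂(μ.prod ν) = ∫⁻ p in s ×ˢ t, w p ∂(μ.prod ν) := by
        rw [Measure.restrict_eq_self_of_ae_mem hst]
    _ ≤ ∫⁻ p in ⋃ i, C.U i ×ˢ C.V i, w p ∂(μ.prod ν) :=
        lintegral_mono_set fun p hp => mem_iUnion.2 (C.cover p hp)
    _ ≤ ∑ i, ∫⁻ p in C.U i ×ˢ C.V i, w p ∂(μ.prod ν) := by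
        rw [← tsum_fintype (L := .unconditional _)]
        exact lintegral_iUnion_le _ _
    _ ≤ ∑ i, a * b * (K i * ENNReal.ofReal (G * ε ^ ((d : ℝ) / 2))) := by
        refine Finset.sum_le_sum fun i _ => ?_
        rw [← hGε]
        refine (lintegral_mono' (Measure.restrict_mono_measure hprod _) le_rfl).trans ?_
        rw [Measure.restrict_smul, lintegral_smul_measure, smul_eq_mul]
        gcongr
        exact hKle i ε hε φ ψ hφ hψ hle
    _ = L * ENNReal.ofReal (G * ε ^ ((d : ℝ) / 2)) := by
        rw [← Finset.mul_sum, ← Finset.sum_mul, ← mul_assoc]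
    _ = ENNReal.ofReal (L.toReal * (G * ε ^ ((d : ℝ) / 2))) := by
        rw [ENNReal.ofReal_mul ENNReal.toReal_nonneg, ENNReal.ofReal_toReal hLtop]
    _ ≤ _ := by
        refine ENNReal.ofReal_le_ofReal ?_
        rw [← mul_assoc]
        gcongr
        linarith

/-- Lower bound on the transport cost plus entropy of a coupling, through potentials. -/
theorem integral_add_integral_sub_log_le {α β : Type*} [MeasurableSpace α] [MeasurableSpace β]
    {γ : Measure (α × β)} [IsProbabilityMeasure γ] {c : α × β → ℝ} (hc : Measurable c)
    (hci : Integrable c γ) {φ : α → ℝ} {ψ : β → ℝ} (hφ : Measurable φ) (hψ : Measurable ψ)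
    (hφi : Integrable φ γ.fst) (hψi : Integrable ψ γ.snd) {ε Z : ℝ} (hε : 0 < ε) (hZ : 0 < Z)
    (hle : ∫⁻ p, ENNReal.ofReal (exp (-((c p - φ p.1 - ψ p.2) / ε))) ∂(γ.fst.prod γ.snd) ≤
      ENNReal.ofReal Z) :
    ((∫ x, φ x ∂γ.fst + ∫ y, ψ y ∂γ.snd - ε * log Z : ℝ) : EReal) ≤
      ((∫ p, c p ∂γ : ℝ) : EReal) + (ε : EReal) * Ent γ (γ.fst.prod γ.snd) := by
  by_cases h : γ ≪ γ.fst.prod γ.snd ∧ Integrable (fun x => ((γ.rnDeriv (γ.fst.prod γ.snd)) x).toReal *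
      log ((γ.rnDeriv (γ.fst.prod γ.snd)) x).toReal) (γ.fst.prod γ.snd)
  · have h1 : Integrable (fun p : α × β => φ p.1) γ := hφi.comp_measurable measurable_fst
    have h2 : Integrable (fun p : α × β => ψ p.2) γ := hψi.comp_measurable measurable_snd
    have h3 : ∫ x, φ x ∂γ.fst = ∫ p, φ p.1 ∂γ :=
      integral_map measurable_fst.aemeasurable hφ.aestronglyMeasurable
    have h4 : ∫ y, ψ y ∂γ.snd = ∫ p, ψ p.2 ∂γ :=
      integral_map measurable_snd.aemeasurable hψ.aestronglyMeasurable
    have h5 : Integrable (fun p => c p - φ p.1) γ := hci.sub h1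
    have key := neg_log_le_integral_add_entropy h.1 h.2
      (F := fun p => (c p - φ p.1 - ψ p.2) / ε) (by fun_prop) ((h5.sub h2).div_const ε) hZ hle
    rw [integral_div, integral_sub h5 h2, integral_sub hci h1, ← h3, ← h4] at key
    rw [Ent, if_pos h, ← EReal.coe_mul, ← EReal.coe_add, EReal.coe_le_coe_iff]
    have := mul_le_mul_of_nonneg_left key hε.le
    rw [mul_add, mul_div_cancel₀ _ hε.ne'] at this
    linarith
  · rw [Ent, if_neg h, EReal.coe_mul_top_of_pos hε, EReal.coe_add_top]
    exact le_top

theorem entCost_congr {α β : Type*} [MeasurableSpace α] [MeasurableSpace β] {μ : Measure α}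
    {ν : Measure β} {c c' : α × β → ℝ}
    (h : ∀ γ : Measure (α × β), γ.fst = μ → γ.snd = ν → c =ᵐ[γ] c') (ε : ℝ) :
    entCost μ ν c ε = entCost μ ν c' ε := by
  rw [entCost, entCost]
  congr 1
  ext v
  refine exists_congr fun γ => and_congr_right fun _ => and_congr_right fun h1 =>
    and_congr_right fun h2 => ?_
  rw [integral_congr_ae (h γ h1 h2)]

theorem ae_mem_prod_of_coupling {α β : Type*} [MeasurableSpace α] [MeasurableSpace β]
    {s : Set α} {t : Set β} (hs : MeasurableSet s) (ht : MeasurableSet t) {γ : Measure (α × β)}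
    (hγs : γ.fst sᶜ = 0) (hγt : γ.snd tᶜ = 0) : ∀ᵐ p ∂γ, p ∈ s ×ˢ t :=
  coupling_compl_prod_eq_zero hs ht hγs hγt

/-- Transfer of a twist cover between costs agreeing on `s ×ˢ t`. -/
def TwistCover.congr {d : ℕ} {ι : Type*} {s t : Set (EuclideanSpace ℝ (Fin d))}
    {c c' : EuclideanSpace ℝ (Fin d) × EuclideanSpace ℝ (Fin d) → ℝ} (C : TwistCover s t c ι)
    (h : EqOn c' c (s ×ˢ t)) : TwistCover s t c' ι :=
  { C with
    abs_sub_le := fun i x hx x' hx' y hy y' hy' => by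
      rw [h ⟨C.U_subset i hx, C.V_subset i hy⟩, h ⟨C.U_subset i hx', C.V_subset i hy'⟩,
        h ⟨C.U_subset i hx, C.V_subset i hy'⟩, h ⟨C.U_subset i hx', C.V_subset i hy⟩]
      exact C.abs_sub_le i x hx x' hx' y hy y' hy' }

theorem entCost_zero_eq_of_dual {α β : Type*} [MeasurableSpace α] [MeasurableSpace β]
    {s : Set α} {t : Set β} {c : α × β → ℝ} {γ : Measure (α × β)} [IsProbabilityMeasure γ]
    (hst : ∀ γ' : Measure (α × β), γ'.fst = γ.fst → γ'.snd = γ.snd → ∀ᵐ p ∂γ', p ∈ s ×ˢ t)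
    (hci : ∀ γ' : Measure (α × β), IsProbabilityMeasure γ' → Integrable c γ')
    (hdual : ∀ η > 0, ∃ φ ψ, Measurable φ ∧ Measurable ψ ∧ Integrable φ γ.fst ∧
      Integrable ψ γ.snd ∧ (∀ x ∈ s, ∀ y ∈ t, φ x + ψ y ≤ c (x, y)) ∧
      ∫ p, c p ∂γ ≤ ∫ x, φ x ∂γ.fst + ∫ y, ψ y ∂γ.snd + η) :
    entCost γ.fst γ.snd c 0 = ((∫ p, c p ∂γ : ℝ) : EReal) := by
  refine le_antisymm ?_ (le_sInf ?_)
  · simpa using entCost_fst_snd_le γ c 0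
  · rintro _ ⟨γ', hγ', h1, h2, rfl⟩
    rw [EReal.coe_zero, zero_mul, add_zero, EReal.coe_le_coe_iff]
    refine le_of_forall_pos_le_add fun η hη => ?_
    obtain ⟨φ, ψ, hφ, hψ, hφi, hψi, hle, hgap⟩ := hdual η hη
    rw [← h1] at hφi hgap
    rw [← h2] at hψi hgap
    have h5 : Integrable (fun p : α × β => φ p.1) γ' := hφi.comp_measurable measurable_fst
    have h6 : Integrable (fun p : α × β => ψ p.2) γ' := hψi.comp_measurable measurable_snd
    rw [Measure.fst, integral_map measurable_fst.aemeasurable hφ.aestronglyMeasurable,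
      Measure.snd, integral_map measurable_snd.aemeasurable hψ.aestronglyMeasurable,
      ← integral_add h5 h6] at hgap
    have h7 : ∫ p, (φ p.1 + ψ p.2) ∂γ' ≤ ∫ p, c p ∂γ' := by
      refine integral_mono_ae (h5.add h6) (hci γ' hγ') ?_
      filter_upwards [hst γ' h1 h2] with p hp using hle p.1 hp.1 p.2 hp.2
    linarith

theorem TwistCover.exists_expansion {d : ℕ} {ι : Type*} [Fintype ι]
    {s t : Set (EuclideanSpace ℝ (Fin d))}
    {c : EuclideanSpace ℝ (Fin d) × EuclideanSpace ℝ (Fin d) → ℝ} (C : TwistCover s t c ι)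
    (hs : IsCompact s) (ht : IsCompact t) (hc : Measurable c) {B : ℝ} (hB : ∀ p, |c p| ≤ B)
    (hcont : ContinuousOn c (s ×ˢ t)) {μ ν : Measure (EuclideanSpace ℝ (Fin d))}
    [IsProbabilityMeasure μ] [IsProbabilityMeasure ν] (hμs : μ sᶜ = 0) (hνt : ν tᶜ = 0)
    {a b : ℝ≥0∞} (ha : a ≠ ⊤) (hb : b ≠ ⊤) (hμ : μ ≤ a • volume) (hν : ν ≤ b • volume) :
    ∃ m M : ℝ, 0 ≤ m ∧ 0 ≤ M ∧ ∀ ε ∈ Ioo (0 : ℝ) 1,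
      entCost μ ν c 0 + (((d : ℝ) / 2 * ε * log (1 / ε) - m * ε : ℝ) : EReal)
          ≤ entCost μ ν c ε ∧
      entCost μ ν c ε
          ≤ entCost μ ν c 0 + (((d : ℝ) / 2 * ε * log (1 / ε) + M * ε : ℝ) : EReal) := by
  obtain ⟨γ, hγ, rfl, rfl, hdual⟩ := exists_optimal_coupling hs ht hμs hνt hcont
  have hst : ∀ γ' : Measure (EuclideanSpace ℝ (Fin d) × EuclideanSpace ℝ (Fin d)),
      γ'.fst = γ.fst → γ'.snd = γ.snd → ∀ᵐ p ∂γ', p ∈ s ×ˢ t := fun γ' h1 h2 =>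
    ae_mem_prod_of_coupling hs.measurableSet ht.measurableSet (h1 ▸ hμs) (h2 ▸ hνt)
  have hci : ∀ γ' : Measure (EuclideanSpace ℝ (Fin d) × EuclideanSpace ℝ (Fin d)),
      IsProbabilityMeasure γ' → Integrable c γ' := fun γ' _ =>
    Integrable.of_bound hc.aestronglyMeasurable B (ae_of_all _ hB)
  replace hdual : ∀ η > 0, ∃ φ ψ, Measurable φ ∧ Measurable ψ ∧ Integrable φ γ.fst ∧
      Integrable ψ γ.snd ∧ (∀ x ∈ s, ∀ y ∈ t, φ x + ψ y ≤ c (x, y)) ∧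
      ∫ p, c p ∂γ ≤ ∫ x, φ x ∂γ.fst + ∫ y, ψ y ∂γ.snd + η := fun η hη => by
    obtain ⟨φ, ψ, hφ, hψ, ⟨Bφ, hBφ⟩, ⟨Bψ, hBψ⟩, hle, hgap⟩ := hdual η hη
    exact ⟨φ, ψ, hφ, hψ, Integrable.of_bound hφ.aestronglyMeasurable Bφ (ae_of_all _ hBφ),
      Integrable.of_bound hψ.aestronglyMeasurable Bψ (ae_of_all _ hBψ), hle, hgap⟩
  obtain ⟨M, hM, hupper⟩ := exists_entCost_le C hs ht hc hB (hst γ rfl rfl)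
  obtain ⟨Z, hZ, hlower⟩ := C.exists_lintegral_exp_le hs ht hc
    (hst (γ.fst.prod γ.snd) (by simp) (by simp)) ha hb hμ hν
  rw [entCost_zero_eq_of_dual hst hci hdual]
  refine ⟨max (log Z) 0, M, le_max_right _ _, hM, fun ε hε => ⟨le_sInf ?_, ?_⟩⟩
  · rintro _ ⟨γ', hγ', h1, h2, rfl⟩
    rw [← EReal.coe_add]
    refine EReal.ge_of_forall_gt_iff_ge.1 fun r hr => ?_
    rw [EReal.coe_lt_coe_iff] at hr
    obtain ⟨φ, ψ, hφ, hψ, hφi, hψi, hle, hgap⟩ := hdual _ (sub_pos.2 hr)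
    have hZε : ∫⁻ p, ENNReal.ofReal (exp (-((c p - φ p.1 - ψ p.2) / ε))) ∂(γ'.fst.prod γ'.snd) ≤
        ENNReal.ofReal (Z * ε ^ ((d : ℝ) / 2)) := by
      rw [h1, h2]
      exact hlower ε hε.1 φ ψ hφ hψ hle
    have hpow : 0 < ε ^ ((d : ℝ) / 2) := rpow_pos_of_pos hε.1 _
    have key := integral_add_integral_sub_log_le hc (hci γ' hγ') hφ hψ (h1 ▸ hφi) (h2 ▸ hψi)
      hε.1 (mul_pos hZ hpow) hZε
    rw [h1, h2] at key
    refine le_trans (EReal.coe_le_coe_iff.2 ?_) key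
    rw [log_mul hZ.ne' hpow.ne', log_rpow hε.1]
    rw [one_div, log_inv] at hgap
    have hmax := mul_le_mul_of_nonneg_right (le_max_left (log Z) 0) hε.1.le
    linarith
  · rw [← EReal.coe_add]
    exact hupper ε hε

/-- **Main theorem**: for infinitesimally twisted `C²` costs on open convex sets and
absolutely continuous, compactly supported marginals with `L^∞` densities,
`v₀ + (d/2) ε log(1/ε) - m ε ≤ v_ε ≤ v₀ + (d/2) ε log(1/ε) + M ε` for `ε ∈ (0,1)`. -/
theorem main_expansion {d : ℕ}
    (Ωm Ωp : Set (EuclideanSpace ℝ (Fin d)))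
    (hΩmo : IsOpen Ωm) (hΩpo : IsOpen Ωp) (hΩmc : Convex ℝ Ωm) (hΩpc : Convex ℝ Ωp)
    (μm μp : Measure (EuclideanSpace ℝ (Fin d)))
    [IsProbabilityMeasure μm] [IsProbabilityMeasure μp]
    (hsm : ∃ K, IsCompact K ∧ K ⊆ Ωm ∧ μm Kᶜ = 0)
    (hsp : ∃ K, IsCompact K ∧ K ⊆ Ωp ∧ μp Kᶜ = 0)
    (hacm : μm ≪ volume) (hacp : μp ≪ volume)
    (hbdm : ∃ C : ℝ≥0∞, C ≠ ⊤ ∧ ∀ᵐ x ∂volume, μm.rnDeriv volume x ≤ C)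
    (hbdp : ∃ C : ℝ≥0∞, C ≠ ⊤ ∧ ∀ᵐ x ∂volume, μp.rnDeriv volume x ≤ C)
    (c : EuclideanSpace ℝ (Fin d) × EuclideanSpace ℝ (Fin d) → ℝ)
    (hc : ContDiffOn ℝ 2 c (Ωm ×ˢ Ωp))
    (htwist : ∀ x ∈ Ωm, ∀ y ∈ Ωp, (crossDeriv c x y).det ≠ 0) :
    ∃ m M : ℝ, 0 ≤ m ∧ 0 ≤ M ∧ ∀ ε ∈ Set.Ioo (0 : ℝ) 1,
      entCost μm μp c 0 + (((d : ℝ) / 2 * ε * Real.log (1 / ε) - m * ε : ℝ) : EReal)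
          ≤ entCost μm μp c ε ∧
      entCost μm μp c ε
          ≤ entCost μm μp c 0 + (((d : ℝ) / 2 * ε * Real.log (1 / ε) + M * ε : ℝ) : EReal) := by
  obtain ⟨s, hs, hsΩ, hμs⟩ := hsm
  obtain ⟨t, ht, htΩ, hνt⟩ := hsp
  obtain ⟨a, ha, hμ⟩ := hbdm
  obtain ⟨b, hb, hν⟩ := hbdp
  obtain ⟨T, ⟨C⟩⟩ := exists_twistCover hs ht
    (fun x hx y hy => hc.contDiffAt ((hΩmo.prod hΩpo).mem_nhds ⟨hsΩ hx, htΩ hy⟩))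
    (fun x hx y hy => htwist x (hsΩ hx) y (htΩ hy))
  have hst : MeasurableSet (s ×ˢ t) := hs.measurableSet.prod ht.measurableSet
  have hcont : ContinuousOn c (s ×ˢ t) := hc.continuousOn.mono (prod_mono hsΩ htΩ)
  have heq : EqOn ((s ×ˢ t).indicator c) c (s ×ˢ t) := eqOn_indicator
  obtain ⟨B, hB⟩ := (hs.prod ht).exists_bound_of_continuousOn hcont
  have hcongr : ∀ ε, entCost μm μp c ε = entCost μm μp ((s ×ˢ t).indicator c) ε := by
    refine entCost_congr fun γ h1 h2 => ?_
    filter_upwards [ae_mem_prod_of_coupling hs.measurableSet ht.measurableSet (h1 ▸ hμs)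
      (h2 ▸ hνt)] with p hp using (heq hp).symm
  have hmeas : Measurable ((s ×ˢ t).indicator c) := by
    rw [← piecewise_eq_indicator]
    exact hcont.measurable_piecewise continuousOn_const hst
  simp_rw [hcongr]
  refine (C.congr heq).exists_expansion hs ht hmeas (B := |B|) (fun p => ?_)
    (hcont.congr heq) hμs hνt ha hb (le_smul_volume_of_rnDeriv_le hacm hμ)
    (le_smul_volume_of_rnDeriv_le hacp hν)
  by_cases hp : p ∈ s ×ˢ t
  · rw [heq hp]
    exact (hB p hp).trans (le_abs_self B)
  · rw [indicator_of_notMem hp, abs_zero]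
    exact abs_nonneg B
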